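/- Let f be an orientation-preserving homeomorphism of ℝ² satisfying (P1) and (P2) and such that Fix(f) is not compact. Then for every finite Borel measure μ on ℝ² invariant under f and every real a > 0, the quantity μ({z ∈ Rec⁺(f) : ρ_{z'}(z) is defined and |ρ_{z'}(z)| ≥ a}) tends to 0 as z' tends to infinity along Fix(f); that is, for every ε > 0 there is a compact set K ⊂ ℝ² such that this measure is less than ε for every z' ∈ Fix(f) ∖ K. -/

import Mathlib

open MeasureTheory Filter Topology Set Metric

noncomputable section

attribute [local instance] Classical.propDecidable

/-- An isotopy (within homeomorphisms of `X`) from the identity to `f`,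
parametrised by `t ∈ [0,1]` (the values for `t ∉ [0,1]` are irrelevant). -/
structure HIsotopy {X : Type*} [TopologicalSpace X] (f : X ≃ₜ X) where
  F : ℝ → X ≃ₜ X
  cont : Continuous fun p : ℝ × X => F p.1 p.2
  cont_symm : Continuous fun p : ℝ × X => (F p.1).symm p.2
  zero : F 0 = Homeomorph.refl X
  one : F 1 = f

/-- The set of fixed points of a map. -/
def FixPts {X : Type*} (g : X → X) : Set X := {z | g z = z}

/-- The set of positively recurrent points of `f`. -/
def RecPlus (f : ℂ ≃ₜ ℂ) : Set ℂ :=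
  {z | ∃ n : ℕ → ℕ, StrictMono n ∧ Tendsto (fun k => (⇑f)^[n k] z) atTop (𝓝 z)}

/-- The total angular variation (number of turns around the origin, i.e. the
integral of the polar-angle form `dθ`) of a continuous path `[0,1] → ℂ ∖ {0}`,
defined via a continuous lift of the argument (junk value otherwise). -/
def angVar (γ : ℝ → ℂ) : ℝ :=
  if h : ∃ θ : ℝ → ℝ, ContinuousOn θ (Set.Icc 0 1) ∧
      ∀ t ∈ Set.Icc (0 : ℝ) 1, γ t = (‖γ t‖ : ℂ) * Complex.exp ((θ t : ℂ) * Complex.I)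
  then (h.choose 1 - h.choose 0) / (2 * Real.pi)
  else 0

/-- `Enlace_I(z,z')`: the integral of `dθ` along `t ↦ f_t(z) - f_t(z')`. -/
def Enlace {f : ℂ ≃ₜ ℂ} (I : HIsotopy f) (z z' : ℂ) : ℝ :=
  angVar fun t => I.F t z - I.F t z'

/-- `Tourne_I(z)`: the integral of `dθ` along `t ↦ f_t(z)`. -/
def Tourne {f : ℂ ≃ₜ ℂ} (I : HIsotopy f) (z : ℂ) : ℝ :=
  angVar fun t => I.F t z

/-- Property (P1): `Enlace_I` is bounded on pairs of distinct fixed points. -/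
def P1 {f : ℂ ≃ₜ ℂ} (I : HIsotopy f) : Prop :=
  ∃ M : ℝ, ∀ z ∈ FixPts ⇑f, ∀ z' ∈ FixPts ⇑f, z ≠ z' → |Enlace I z z'| ≤ M

/-- Property (P2): `Tourne_I` is constant on the fixed points in a
neighbourhood of infinity (i.e. outside some compact set). -/
def P2 {f : ℂ ≃ₜ ℂ} (I : HIsotopy f) : Prop :=
  ∃ K : Set ℂ, IsCompact K ∧
    ∀ z ∈ FixPts ⇑f \ K, ∀ z' ∈ FixPts ⇑f \ K, Tourne I z = Tourne I z'

/-- An isotopy is adapted if `Tourne_I` vanishes on the fixed points in a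
neighbourhood of infinity. -/
def Adapted {f : ℂ ≃ₜ ℂ} (I : HIsotopy f) : Prop :=
  ∃ K : Set ℂ, IsCompact K ∧ ∀ z ∈ FixPts ⇑f \ K, Tourne I z = 0

/-- The orbit of `z` has rotation number `ρ` around `z'` (with respect to the
isotopy `I`): along every strictly increasing sequence of integers `(n k)` with
`f^[n k] z → z`, the Birkhoff averages of `Enlace I · z'` converge to `ρ`. -/
def HasRot {f : ℂ ≃ₜ ℂ} (I : HIsotopy f) (z' z : ℂ) (ρ : ℝ) : Prop :=
  ∀ n : ℕ → ℕ, StrictMono n → Tendsto (fun k => (⇑f)^[n k] z) atTop (𝓝 z) →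
    Tendsto (fun k => (∑ r ∈ Finset.range (n k), Enlace I ((⇑f)^[r] z) z') / (n k : ℝ))
      atTop (𝓝 ρ)

/-- The rotation number `ρ_{z'}(z)` as a function (junk value `0` if it is
not defined). -/
def rho {f : ℂ ≃ₜ ℂ} (I : HIsotopy f) (z' z : ℂ) : ℝ :=
  if h : ∃ ρ : ℝ, HasRot I z' z ρ then h.choose else 0

/-- A free disc for `f`: an open set homeomorphic to the plane and disjoint
from its image. -/
def FreeDisc (f : ℂ ≃ₜ ℂ) (U : Set ℂ) : Prop :=
  IsOpen U ∧ Nonempty (U ≃ₜ ℂ) ∧ Disjoint (⇑f '' U) U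

/-- The first return time `τ_U(z)` to `U` (junk value `0` if the orbit never
returns). -/
def retTime (f : ℂ ≃ₜ ℂ) (U : Set ℂ) (z : ℂ) : ℕ :=
  sInf {n : ℕ | 0 < n ∧ (⇑f)^[n] z ∈ U}

/-- `γ` is a path in `U` from `x` to `y` (parametrised by `[0,1]`). -/
def IsPathIn (U : Set ℂ) (x y : ℂ) (γ : ℝ → ℂ) : Prop :=
  ContinuousOn γ (Set.Icc 0 1) ∧ (∀ t ∈ Set.Icc (0 : ℝ) 1, γ t ∈ U) ∧ γ 0 = x ∧ γ 1 = y

/-- `α_{U,z'}(z) = Σ_{0 ≤ ℓ < τ_U(z)} Enlace_I(f^ℓ(z),z') + ∫_{γ_{U,z} - z'} dθ`,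
where `γ_{U,z}` is a path in `U` joining the first return `F_U(z)` to `z`. -/
def alphaU {f : ℂ ≃ₜ ℂ} (I : HIsotopy f) (U : Set ℂ) (z' z : ℂ) : ℝ :=
  (∑ ℓ ∈ Finset.range (retTime f U z), Enlace I ((⇑f)^[ℓ] z) z') +
    if h : ∃ γ : ℝ → ℂ, IsPathIn U ((⇑f)^[retTime f U z] z) z γ
    then angVar fun t => h.choose t - z' else 0

/-- `α̂_{U,R}(z) = sup { |α_{U,z'}(z)| : z' ∈ Fix(f), ‖z'‖ ≥ R }`. -/
def alphaHat {f : ℂ ≃ₜ ℂ} (I : HIsotopy f) (U : Set ℂ) (R : ℝ) (z : ℂ) : ℝ :=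
  sSup {a : ℝ | ∃ z' ∈ FixPts ⇑f, R ≤ ‖z'‖ ∧ a = |alphaU I U z' z|}

/-- The (closed) support of a measure. -/
def measSupport {X : Type*} [TopologicalSpace X] {m : MeasurableSpace X}
    (μ : Measure X) : Set X :=
  {x | ∀ U : Set X, IsOpen U → x ∈ U → μ U ≠ 0}

/-- The standard unit sphere `S² ⊂ ℝ³`. -/
notation "𝕊²" => Metric.sphere (0 : EuclideanSpace ℝ (Fin 3)) 1

instance : Fact (Module.finrank ℝ (EuclideanSpace ℝ (Fin 3)) = 3) :=
  ⟨finrank_euclideanSpace_fin⟩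

open Manifold in
/-- `g` is a `C¹` diffeomorphism of the standard sphere. -/
def IsC1SphereDiffeo (g : 𝕊² → 𝕊²) : Prop :=
  Function.Bijective g ∧ ContMDiff (𝓡 2) (𝓡 2) 1 g ∧
    ∃ g' : 𝕊² → 𝕊², Function.LeftInverse g' g ∧ Function.RightInverse g' g ∧
      ContMDiff (𝓡 2) (𝓡 2) 1 g'

/-- `f` extends to a `C¹` diffeomorphism of `S² = ℝ² ⊔ {∞}` for some smooth
structure on `S²`: transporting the extension of `f` to the one-point
compactification through some homeomorphism with the standard sphere yields a
`C¹` diffeomorphism. -/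
def ExtendsToC1SphereDiffeo (f : ℂ ≃ₜ ℂ) : Prop :=
  ∃ φ : OnePoint ℂ ≃ₜ 𝕊², IsC1SphereDiffeo fun x => φ (OnePoint.map (⇑f) (φ.symm x))

/-- The commutator loop `t ↦ [f₁^t, f₂^t] = f₁^t ∘ f₂^t ∘ (f₁^t)⁻¹ ∘ (f₂^t)⁻¹`. -/
def commLoop {X : Type*} [TopologicalSpace X] {f₁ f₂ : X ≃ₜ X}
    (I₁ : HIsotopy f₁) (I₂ : HIsotopy f₂) (t : ℝ) : X ≃ₜ X :=
  (I₂.F t).symm.trans ((I₁.F t).symm.trans ((I₂.F t).trans (I₁.F t)))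

/-- The invariant `W(f₁,f₂)` vanishes: for isotopies from the identity to
`f₁`, `f₂`, the commutator loop is null-homotopic (rel basepoint) in the group
of homeomorphisms. -/
def WVanishes {X : Type*} [TopologicalSpace X] (f₁ f₂ : X ≃ₜ X) : Prop :=
  ∃ (I₁ : HIsotopy f₁) (I₂ : HIsotopy f₂) (H : ℝ → ℝ → X ≃ₜ X),
    Continuous (fun p : (ℝ × ℝ) × X => H p.1.1 p.1.2 p.2) ∧
    Continuous (fun p : (ℝ × ℝ) × X => (H p.1.1 p.1.2).symm p.2) ∧
    (∀ t, H 0 t = commLoop I₁ I₂ t) ∧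
    (∀ t, H 1 t = Homeomorph.refl X) ∧
    (∀ s, H s 0 = Homeomorph.refl X) ∧
    (∀ s, H s 1 = Homeomorph.refl X)

/-- The shorter great-circle arc joining `p` to `z` on the unit sphere
(for `z` neither `p` nor its antipode): the points of the sphere which are
nonnegative linear combinations of `p` and `z`. -/
def minorArcS (p z : 𝕊²) : Set 𝕊² :=
  {x | ∃ a b : ℝ, 0 ≤ a ∧ 0 ≤ b ∧
    (x : EuclideanSpace ℝ (Fin 3)) =
      a • (p : EuclideanSpace ℝ (Fin 3)) + b • (z : EuclideanSpace ℝ (Fin 3))}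

/-- The longer great-circle arc joining `p` to `z` on the unit sphere. -/
def majorArcS (p z : 𝕊²) : Set 𝕊² :=
  {x | ∃ a b : ℝ, (a ≤ 0 ∨ b ≤ 0) ∧
    (x : EuclideanSpace ℝ (Fin 3)) =
      a • (p : EuclideanSpace ℝ (Fin 3)) + b • (z : EuclideanSpace ℝ (Fin 3))}


/-! ### Lifting tools -/

lemma lift_homotopy {A : Type*} [TopologicalSpace A] (u : ℝ × A → ℂ) (hu : Continuous u)
    (h0 : ∀ p, u p ≠ 0) (v : A → ℂ) (hv : Continuous v) (hv0 : ∀ a, Complex.exp (v a) = u (0, a)) :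
    ∃ V : ℝ × A → ℂ, Continuous V ∧
      (∀ t ∈ Icc (0 : ℝ) 1, ∀ a, Complex.exp (V (t, a)) = u (t, a)) ∧ ∀ a, V (0, a) = v a := by
  let H : C(unitInterval × A, {z : ℂ // z ≠ 0}) :=
    ⟨fun p => ⟨u (p.1, p.2), h0 _⟩, by fun_prop⟩
  let f : C(A, ℂ) := ⟨v, hv⟩
  have H0 : ∀ a, H (0, a) = (⟨_, (f a).exp_ne_zero⟩ : {z : ℂ // z ≠ 0}) := by
    intro a
    apply Subtype.ext
    simp [H, f, hv0]
  let G := Complex.isCoveringMap_exp.liftHomotopy H f H0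
  have hG := Complex.isCoveringMap_exp.liftHomotopy_lifts H f H0
  have hG0 := Complex.isCoveringMap_exp.liftHomotopy_zero H f H0
  refine ⟨fun p => G (projIcc 0 1 zero_le_one p.1, p.2), ?_, ?_, ?_⟩
  · have : Continuous (projIcc (0 : ℝ) 1 zero_le_one) := continuous_projIcc
    exact G.continuous.comp (by fun_prop)
  · intro t ht a
    have := congrFun hG (⟨t, ht⟩, a)
    have h2 := congrArg Subtype.val this
    simp only [projIcc_of_mem _ ht]
    exact h2
  · intro a
    have h3 : projIcc (0 : ℝ) 1 zero_le_one 0 = 0 := projIcc_left _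
    simp only [h3]
    exact hG0 a

lemma lift_convex {E : Type*} [AddCommGroup E] [Module ℝ E] [TopologicalSpace E]
    [IsTopologicalAddGroup E] [ContinuousSMul ℝ E] (S : Set E) (hS : Convex ℝ S)
    (u : E → ℂ) (hu : ContinuousOn u S) (h0 : ∀ x ∈ S, u x ≠ 0) :
    ∃ φ : E → ℂ, ContinuousOn φ S ∧ ∀ x ∈ S, Complex.exp (φ x) = u x := by
  rcases S.eq_empty_or_nonempty with rfl | ⟨x0, hx0⟩
  · exact ⟨0, by simp, by simp⟩
  have hmem : ∀ p : ℝ × S, x0 + (projIcc (0 : ℝ) 1 zero_le_one p.1 : ℝ) • ((p.2 : E) - x0) ∈ S := by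
    intro p
    exact hS.add_smul_sub_mem hx0 p.2.2 (projIcc (0 : ℝ) 1 zero_le_one p.1).2
  have hpc : Continuous (projIcc (0 : ℝ) 1 zero_le_one) := continuous_projIcc
  obtain ⟨V, hV, hV1, -⟩ := lift_homotopy (A := S)
    (fun p => u (x0 + (projIcc (0 : ℝ) 1 zero_le_one p.1 : ℝ) • ((p.2 : E) - x0)))
    (hu.comp_continuous (by fun_prop) hmem) (fun p => h0 _ (hmem p))
    (fun _ => Complex.log (u x0)) continuous_const
    (by intro a; simp [Complex.exp_log (h0 _ hx0)])
  refine ⟨fun x => if h : x ∈ S then V (1, ⟨x, h⟩) else 0, ?_, ?_⟩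
  · rw [continuousOn_iff_continuous_domRestrict]
    have : S.domRestrict (fun x => if h : x ∈ S then V (1, ⟨x, h⟩) else 0) = fun a : S => V (1, a) := by
      ext a; simp
    rw [this]; fun_prop
  · intro x hx
    simp only [hx, dite_true]
    rw [hV1 1 (by simp)]
    simp

lemma exp_const_of_preconnected {X : Type*} [TopologicalSpace X] {S : Set X}
    (hS : IsPreconnected S) {g : X → ℂ} (hg : ContinuousOn g S) {c : ℂ}
    (hc : ∀ x ∈ S, Complex.exp (g x) = c) {x y : X} (hx : x ∈ S) (hy : y ∈ S) : g x = g y := by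
  have hd : IsDiscrete {z : ℂ | Complex.exp z = Complex.exp (g x)} := by
    rw [isDiscrete_iff_forall_mem_exists_isOpen]
    intro z hz
    refine ⟨Metric.ball z 1, isOpen_ball, ?_⟩
    ext w
    simp only [mem_inter_iff, mem_ball, mem_ofPred_eq, mem_singleton_iff]
    constructor
    · rintro ⟨hw, hw2⟩
      obtain ⟨n, hn⟩ := Complex.exp_eq_exp_iff_exists_int.1 (hw2.trans hz.symm)
      rw [hn, dist_eq_norm, add_sub_cancel_left, norm_mul, norm_mul, norm_mul] at hw
      simp only [Complex.norm_intCast, Complex.norm_I, Complex.norm_ofNat, Complex.norm_real,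
        Real.norm_eq_abs, abs_of_pos Real.pi_pos] at hw
      have hn0 : n = 0 := by
        by_contra h
        have h1 : (1 : ℝ) ≤ |(n : ℝ)| := by exact_mod_cast Int.one_le_abs h
        nlinarith [Real.pi_gt_three]
      rw [hn, hn0]; simp
    · rintro rfl
      exact ⟨by simp, hz⟩
  exact hS.constant_of_mapsTo hd hg (fun w hw => by simp [hc w hw, hc x hx]) hx hy

/-- A map of the plane has a continuous symmetric logarithm of its difference quotient. -/
def GoodMap (h : ℂ → ℂ) : Prop :=
  ∃ L : ℂ × ℂ → ℂ, ContinuousOn L {p | p.1 ≠ p.2} ∧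
    (∀ p : ℂ × ℂ, p.1 ≠ p.2 → Complex.exp (L p) * (p.1 - p.2) = h p.1 - h p.2) ∧
    ∀ p : ℂ × ℂ, p.1 ≠ p.2 → L p.swap = L p

lemma GoodMap.comp {g h : ℂ → ℂ} (hg : GoodMap g) (hh : GoodMap h) (hc : Continuous h)
    (hi : Function.Injective h) : GoodMap (g ∘ h) := by
  obtain ⟨L, hL, hL1, hL2⟩ := hg
  obtain ⟨K, hK, hK1, hK2⟩ := hh
  refine ⟨fun p => L (h p.1, h p.2) + K p, ?_, ?_, ?_⟩
  · refine ContinuousOn.add (hL.comp (by fun_prop) ?_) hK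
    intro p hp
    exact fun h => hp (hi h)
  · intro p hp
    have := hL1 (h p.1, h p.2) (fun h => hp (hi h))
    simp only [Function.comp] at *
    rw [Complex.exp_add, mul_assoc, hK1 p hp, this]
  · intro p hp
    have := hL2 (h p.1, h p.2) (fun h => hp (hi h))
    simp only [Prod.swap] at *
    rw [this]
    exact congrArg _ (hK2 p hp)

lemma GoodMap.id : GoodMap (fun z => z) :=
  ⟨fun _ => 0, continuousOn_const, by simp, by simp⟩

lemma GoodMap.add_const {h : ℂ → ℂ} (hh : GoodMap h) (c : ℂ) : GoodMap (fun z => h z + c) := by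
  obtain ⟨K, hK, hK1, hK2⟩ := hh
  exact ⟨K, hK, fun p hp => by rw [hK1 p hp]; ring, hK2⟩

/-- A perturbation of the identity with Lipschitz constant `1/2` is good. -/
lemma GoodMap.of_lip {v : ℂ → ℂ} (hv : ∀ x y, ‖v x - v y‖ ≤ 1 / 2 * ‖x - y‖)
    (hc : Continuous v) : GoodMap (fun z => z + v z) := by
  have key : ∀ p : ℂ × ℂ, p.1 ≠ p.2 → ‖(v p.1 - v p.2) / (p.1 - p.2)‖ < 1 := by
    intro p hp
    have h1 : 0 < ‖p.1 - p.2‖ := norm_pos_iff.2 (sub_ne_zero.2 hp)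
    rw [norm_div, div_lt_one h1]
    linarith [hv p.1 p.2]
  refine ⟨fun p => Complex.log (1 + (v p.1 - v p.2) / (p.1 - p.2)), ?_, ?_, ?_⟩
  · apply ContinuousOn.clog
    · apply ContinuousOn.add continuousOn_const
      apply ContinuousOn.div (by fun_prop) (by fun_prop)
      intro p hp
      exact sub_ne_zero.2 hp
    · intro p hp
      exact Complex.mem_slitPlane_of_norm_lt_one (key p hp)
  · intro p hp
    have h1 : p.1 - p.2 ≠ 0 := sub_ne_zero.2 hp
    rw [Complex.exp_log (Complex.slitPlane_ne_zero (Complex.mem_slitPlane_of_norm_lt_one (key p hp)))]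
    field_simp
    ring
  · intro p hp
    simp only [Prod.fst_swap, Prod.snd_swap]
    rw [← neg_sub (v p.1), ← neg_sub p.1, neg_div_neg_eq]

/-! ### Brouwer's lemma: a periodic point forces a fixed point -/

lemma brouwer_core (h : ℂ → ℂ) (hc : Continuous h) (hg : GoodMap h) (hfix : ∀ z, h z ≠ z)
    (Λ : ℝ → ℂ) (hΛc : ContinuousOn Λ (Ici 0)) (hΛ : ∀ t, 0 ≤ t → Λ (t + 1) = h (Λ t))
    (s P : ℝ) (hs : 0 ≤ s) (hP : 1 < P) (hsP : Λ (s + P) = Λ s)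
    (hmin : ∀ a b, 0 ≤ a → a < b → b < a + P → Λ a ≠ Λ b) : False := by
  obtain ⟨L, hL, hL1, hL2⟩ := hg
  -- logarithm of the displacement
  obtain ⟨θ, hθ, hθ1⟩ := lift_convex (univ : Set ℂ) convex_univ (fun z => h z - z)
    (by fun_prop) (fun z _ => sub_ne_zero.2 (hfix z))
  rw [continuousOn_univ] at hθ
  have hθ1 : ∀ z, Complex.exp (θ z) = h z - z := fun z => hθ1 z (mem_univ z)
  have hi : ∀ a b, a ≠ b → h a ≠ h b := by
    intro a b hab he
    have := hL1 (a, b) hab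
    simp only [he, sub_self, mul_eq_zero, Complex.exp_ne_zero, false_or] at this
    exact hab (sub_eq_zero.1 this)
  have hLD : Continuous fun z => L (z, h z) := by
    refine hL.comp_continuous (by fun_prop) ?_
    intro z
    exact (hfix z).symm
  have hC : ∀ z w, θ (h z) - θ z - L (z, h z) = θ (h w) - θ w - L (w, h w) := by
    intro z w
    refine exp_const_of_preconnected (S := univ) isPreconnected_univ
      (g := fun z => θ (h z) - θ z - L (z, h z)) (c := 1) ?_ ?_ (mem_univ z) (mem_univ w)
    · exact (((hθ.comp hc).sub hθ).sub hLD).continuousOn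
    · intro z _
      have h1 := hL1 (z, h z) (hfix z).symm
      have h2 : h z - z ≠ 0 := sub_ne_zero.2 (hfix z)
      have h3 : h (h z) - h z = Complex.exp (L (z, h z)) * (h z - z) := by
        linear_combination h1
      rw [Complex.exp_sub, Complex.exp_sub, hθ1, hθ1, h3]
      field_simp
  obtain ⟨C, hC⟩ : ∃ C, ∀ z, θ (h z) - θ z - L (z, h z) = C := ⟨_, fun z => hC z 0⟩
  -- logarithm of chords on the strip
  let S : Set (ℝ × ℝ) := {p | 0 ≤ p.1 ∧ p.1 < p.2 ∧ p.2 < p.1 + P}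
  have hS : Convex ℝ S := by
    intro p hp q hq α β hα hβ hαβ
    obtain ⟨h1, h2, h3⟩ := hp
    obtain ⟨k1, k2, k3⟩ := hq
    have hβe : β = 1 - α := by linarith
    subst hβe
    simp only [S, mem_ofPred_eq, Prod.fst_add, Prod.snd_add, Prod.smul_fst, Prod.smul_snd,
      smul_eq_mul]
    refine ⟨by positivity, ?_, ?_⟩
    · rcases hα.eq_or_lt with rfl | hα
      · linarith
      · nlinarith
    · rcases hα.eq_or_lt with rfl | hα
      · linarith
      · nlinarith
  have hΛ1 : ContinuousOn (fun p : ℝ × ℝ => Λ p.1) S :=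
    hΛc.comp (by fun_prop) (fun p hp => hp.1)
  have hΛ2 : ContinuousOn (fun p : ℝ × ℝ => Λ p.2) S :=
    hΛc.comp (by fun_prop) (fun p hp => hp.1.trans hp.2.1.le)
  have hne : ∀ p ∈ S, Λ p.1 ≠ Λ p.2 := fun p hp => hmin _ _ hp.1 hp.2.1 hp.2.2
  obtain ⟨φ, hφ, hφ1⟩ := lift_convex S hS (fun p => Λ p.2 - Λ p.1) (hΛ2.sub hΛ1)
    (fun p hp => sub_ne_zero.2 (hne p hp).symm)
  have hshift : ∀ p ∈ S, p + (1, 1) ∈ S := by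
    intro p hp
    obtain ⟨h1, h2, h3⟩ := hp
    simp only [S, mem_ofPred_eq, Prod.fst_add, Prod.snd_add]
    exact ⟨by linarith, by linarith, by linarith⟩
  have hdiag : ∀ a, 0 ≤ a → (a, a + 1) ∈ S := fun a ha => ⟨ha, by simp, by simpa using hP⟩
  have hexpφ : ∀ p ∈ S, Complex.exp (φ (p + (1, 1))) =
      Complex.exp (L (Λ p.1, Λ p.2)) * Complex.exp (φ p) := by
    intro p hp
    have h1 := hL1 (Λ p.1, Λ p.2) (hne p hp)
    rw [hφ1 _ (hshift p hp), hφ1 p hp]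
    simp only [Prod.fst_add, Prod.snd_add]
    rw [hΛ _ hp.1, hΛ _ (hp.1.trans hp.2.1.le)]
    linear_combination h1
  have hC' : ∀ p ∈ S, ∀ q ∈ S, φ (p + (1, 1)) - φ p - L (Λ p.1, Λ p.2) =
      φ (q + (1, 1)) - φ q - L (Λ q.1, Λ q.2) := by
    intro p hp q hq
    refine exp_const_of_preconnected (S := S) hS.isPreconnected
      (g := fun p => φ (p + (1, 1)) - φ p - L (Λ p.1, Λ p.2)) (c := 1) ?_ ?_ hp hq
    · refine ContinuousOn.sub (ContinuousOn.sub (hφ.comp (by fun_prop) hshift) hφ) ?_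
      exact hL.comp (hΛ1.prodMk hΛ2) hne
    · intro p hp
      have := hexpφ p hp
      rw [Complex.exp_sub, Complex.exp_sub, this]
      field_simp [Complex.exp_ne_zero]
  -- compare φ on the diagonal with θ
  have hC'' : ∀ a b, 0 ≤ a → 0 ≤ b → φ (a, a + 1) - θ (Λ a) = φ (b, b + 1) - θ (Λ b) := by
    intro a b ha hb
    refine exp_const_of_preconnected (S := Ici (0 : ℝ)) (convex_Ici 0).isPreconnected
      (g := fun a => φ (a, a + 1) - θ (Λ a)) (c := 1) ?_ ?_ ha hb
    · exact (hφ.comp (by fun_prop) (fun a ha => hdiag a ha)).sub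
        (hθ.comp_continuousOn hΛc)
    · intro a ha
      rw [Complex.exp_sub, hφ1 _ (hdiag a ha), hθ1, ← hΛ a ha]
      apply div_self
      exact sub_ne_zero.2 (hne _ (hdiag a ha)).symm
  have hCC : ∀ p ∈ S, φ (p + (1, 1)) - φ p - L (Λ p.1, Λ p.2) = C := by
    intro p hp
    rw [hC' p hp (0, 0 + 1) (hdiag 0 le_rfl), ← hC (Λ 0), ← hΛ 0 le_rfl]
    have := hC'' 0 (0 + 1) le_rfl (by simp)
    simp only [Prod.mk_add_mk] at *
    linear_combination -this
  -- chords through the double point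
  have hκ : ∀ b c, s < b → b < s + P → s < c → c < s + P →
      φ (b, s + P) - φ (s, b) = φ (c, s + P) - φ (s, c) ∧
        Complex.exp (φ (b, s + P) - φ (s, b)) = -1 := by
    have hm1 : ∀ b ∈ Ioo s (s + P), (b, s + P) ∈ S := fun b hb =>
      ⟨by linarith [hb.1], hb.2, by simpa using hb.1⟩
    have hm2 : ∀ b ∈ Ioo s (s + P), (s, b) ∈ S := fun b hb => ⟨hs, hb.1, hb.2⟩
    have hexp : ∀ b ∈ Ioo s (s + P), Complex.exp (φ (b, s + P) - φ (s, b)) = -1 := by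
      intro b hb
      rw [Complex.exp_sub, hφ1 _ (hm1 b hb), hφ1 _ (hm2 b hb)]
      simp only [hsP]
      rw [← neg_sub (Λ b), neg_div, div_self]
      exact sub_ne_zero.2 (hne _ (hm2 b hb)).symm
    intro b c hb1 hb2 hc1 hc2
    refine ⟨?_, hexp b ⟨hb1, hb2⟩⟩
    refine exp_const_of_preconnected (S := Ioo s (s + P)) (convex_Ioo _ _).isPreconnected
      (g := fun b => φ (b, s + P) - φ (s, b)) (c := -1) ?_ hexp ⟨hb1, hb2⟩ ⟨hc1, hc2⟩
    exact (hφ.comp (by fun_prop) hm1).sub (hφ.comp (by fun_prop) hm2)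
  -- conclusion
  have hb := hκ (s + P - 1) (s + 1) (by linarith) (by linarith) (by linarith) (by linarith)
  have e1 := hCC (s, s + P - 1) ⟨hs, by simp only; linarith, by simp only; linarith⟩
  have e2 := hCC (s + P - 1, s + P) ⟨by simp only; linarith, by simp only; linarith,
    by simp only; linarith⟩
  have hsym := hL2 (Λ s, Λ (s + P - 1)) (hmin _ _ hs (by linarith) (by linarith))
  have e3 := hC'' (s + P) s (by linarith) hs
  simp only [Prod.mk_add_mk, Prod.swap_prod_mk, hsP, sub_add_cancel] at e1 e2 e3 hsym
  rw [hsym] at e2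
  obtain ⟨hb1, hb2⟩ := hb
  have : φ (s + P - 1, s + P) - φ (s, s + P - 1) = 0 := by
    linear_combination (1/2 : ℂ) * hb1 + (1/2 : ℂ) * (e1 - e2 + e3)
  rw [this] at hb2
  norm_num at hb2

lemma critical_disc (h : ℂ ≃ₜ ℂ) (hfix : ∀ z, h z ≠ z) (x : ℂ) :
    ∃ y : ℂ, ∃ r : ℝ, 0 < r ∧ ‖y - x‖ = r ∧ ‖h y - x‖ = r ∧ ∀ z, ‖z - x‖ < r → r ≤ ‖h z - x‖ := by
  let m : ℂ → ℝ := fun z => max ‖z - x‖ ‖h z - x‖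
  have hm : Continuous m := by fun_prop
  have htend : Tendsto m (cocompact ℂ) atTop := by
    have h1 : Tendsto (fun z : ℂ => ‖z - x‖) (cocompact ℂ) atTop := by
      have h2 : Tendsto (fun z : ℂ => ‖z‖ - ‖x‖) (cocompact ℂ) atTop := by
        simpa [sub_eq_add_neg] using tendsto_atTop_add_const_right _ (-‖x‖)
          (tendsto_norm_cocompact_atTop (E := ℂ))
      exact tendsto_atTop_mono (fun z => norm_sub_norm_le z x) h2
    exact tendsto_atTop_mono (fun z => le_max_left _ _) h1
  obtain ⟨y, hy⟩ := hm.exists_forall_le htend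
  have hpos : 0 < m y := by
    rcases eq_or_ne y x with rfl | hyx
    · exact lt_max_of_lt_right (norm_pos_iff.2 (sub_ne_zero.2 (hfix y)))
    · exact lt_max_of_lt_left (norm_pos_iff.2 (sub_ne_zero.2 hyx))
  have hray : ∀ w : ℂ, ‖w - x‖ = m y → ∀ U : Set ℂ, IsOpen U → w ∈ U →
      ∃ w' ∈ U, ‖w' - x‖ < m y := by
    intro w hw U hU hwU
    have hcont : Tendsto (fun e : ℝ => w - (e : ℂ) * (w - x)) (𝓝[>] 0) (𝓝 w) := by
      have : Continuous (fun e : ℝ => w - (e : ℂ) * (w - x)) := by fun_prop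
      have h2 := this.tendsto 0
      simp only [Complex.ofReal_zero, zero_mul, sub_zero] at h2
      exact h2.mono_left nhdsWithin_le_nhds
    have hev := (hcont.eventually (hU.mem_nhds hwU)).and
      ((Ioo_mem_nhdsGT (show (0:ℝ) < 1 by norm_num)))
    obtain ⟨e, he1, he2⟩ := hev.exists
    refine ⟨_, he1, ?_⟩
    have : w - (e : ℂ) * (w - x) - x = ((1 - e : ℝ) : ℂ) * (w - x) := by push_cast; ring
    rw [this, norm_mul, hw, Complex.norm_real, Real.norm_eq_abs,
      abs_of_pos (by linarith [he2.2])]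
    nlinarith [he2.1]
  have hA : ‖y - x‖ = m y := by
    by_contra hne
    have hlt : ‖y - x‖ < m y := lt_of_le_of_ne (le_max_left _ _) hne
    have he : ‖h y - x‖ = m y := by
      rcases max_choice ‖y - x‖ ‖h y - x‖ with hh | hh
      · exact absurd hh.symm hne
      · exact hh.symm
    obtain ⟨w, hw1, hw2⟩ := hray (h y) he (h.symm ⁻¹' {z | ‖z - x‖ < m y})
      ((isOpen_lt (by fun_prop) continuous_const).preimage h.symm.continuous) (by simpa using hlt)
    have := hy (h.symm w)
    have h2 : m (h.symm w) < m y := max_lt hw1 (by simpa using hw2)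
    linarith
  have hB : ‖h y - x‖ = m y := by
    by_contra hne
    have hlt : ‖h y - x‖ < m y := lt_of_le_of_ne (le_max_right _ _) hne
    obtain ⟨w, hw1, hw2⟩ := hray y hA {z | ‖h z - x‖ < m y}
      (isOpen_lt (by fun_prop) continuous_const) hlt
    have := hy w
    have h2 : m w < m y := max_lt hw2 hw1
    linarith
  refine ⟨y, m y, hpos, hA, hB, ?_⟩
  intro z hz
  by_contra hcon
  have := hy z
  have h2 : m z < m y := max_lt hz (not_le.1 hcon)
  linarith

theorem brouwer_periodic (h : ℂ ≃ₜ ℂ) (hg : GoodMap h) (hfix : ∀ z, h z ≠ z) (n : ℕ) (hn : 0 < n)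
    (x : ℂ) (hx : (⇑h)^[n] x = x) : False := by
  obtain ⟨y, r, hr, hyr, hhyr, hfree⟩ := critical_disc h hfix x
  let α : ℝ → ℂ := fun s => x + (((1 - s) * (1 - 2 * s) : ℝ) : ℂ) * (y - x)
    - ((s * (1 - 2 * s) : ℝ) : ℂ) * (h y - x)
  have hαc : Continuous α := by fun_prop
  have hα0 : α 0 = y := by simp [α]
  have hα1 : α 1 = h y := by simp [α]; ring
  have hαh : α (1 / 2) = x := by simp [α]
  have hαnorm : ∀ s, 0 ≤ s → s ≤ 1 → ‖α s - x‖ ≤ |1 - 2 * s| * r := by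
    intro s hs0 hs1
    have : α s - x = (((1 - s) * (1 - 2 * s) : ℝ) : ℂ) * (y - x)
      - ((s * (1 - 2 * s) : ℝ) : ℂ) * (h y - x) := by simp only [α]; ring
    rw [this]
    refine (norm_sub_le _ _).trans ?_
    rw [norm_mul, norm_mul, hyr, hhyr, Complex.norm_real, Complex.norm_real, Real.norm_eq_abs,
      Real.norm_eq_abs, abs_mul, abs_mul, abs_of_nonneg hs0, abs_of_nonneg (by linarith : 0 ≤ 1 - s)]
    apply le_of_eq; ring
  have hαB : ∀ s, 0 < s → s < 1 → ‖α s - x‖ < r := by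
    intro s h0 h1
    refine (hαnorm s h0.le h1.le).trans_lt ?_
    have : |1 - 2 * s| < 1 := by rw [abs_lt]; constructor <;> linarith
    nlinarith
  have hαcl : ∀ s, 0 ≤ s → s ≤ 1 → ‖α s - x‖ ≤ r := by
    intro s h0 h1
    refine (hαnorm s h0 h1).trans ?_
    have : |1 - 2 * s| ≤ 1 := by rw [abs_le]; constructor <;> linarith
    nlinarith
  have hαinj : ∀ s t, α s = α t → s = t := by
    intro s t hst
    have e : ((((1 - s) * (1 - 2 * s) - (1 - t) * (1 - 2 * t)) : ℝ) : ℂ) * (y - x) =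
        (((s * (1 - 2 * s) - t * (1 - 2 * t)) : ℝ) : ℂ) * (h y - x) := by
      simp only [α] at hst
      push_cast at hst ⊢
      linear_combination hst
    have e2 := congrArg norm e
    rw [norm_mul, norm_mul, hyr, hhyr, Complex.norm_real, Complex.norm_real, Real.norm_eq_abs,
      Real.norm_eq_abs] at e2
    have e3 := mul_right_cancel₀ hr.ne' e2
    rcases abs_eq_abs.1 e3 with e4 | e4
    · rw [e4] at e
      by_cases h0 : s * (1 - 2 * s) - t * (1 - 2 * t) = 0
      · linarith
      · have := mul_left_cancel₀ (by exact_mod_cast h0) e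
        exact absurd (sub_left_injective this).symm (hfix y)
    · linarith
  -- the line
  let Λ : ℝ → ℂ := fun t => (⇑h)^[⌊t⌋₊] (α (t - ⌊t⌋₊))
  have hΛ : ∀ t, 0 ≤ t → Λ (t + 1) = h (Λ t) := by
    intro t ht
    simp only [Λ]
    rw [Nat.floor_add_one ht, Function.iterate_succ_apply']
    congr 3
    push_cast; ring
  have hΛn : ∀ (k : ℕ) t, 0 ≤ t → Λ (t + k) = (⇑h)^[k] (Λ t) := by
    intro k
    induction k with
    | zero => intro t ht; simp
    | succ k ih =>
      intro t ht
      rw [Function.iterate_succ_apply', ← ih t ht, ← hΛ _ (by positivity)]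
      push_cast; congr 1; ring
  have hΛα : ∀ s, 0 ≤ s → s ≤ 1 → Λ s = α s := by
    intro s h0 h1
    rcases h1.eq_or_lt with rfl | h1
    · simp [Λ, hα0, hα1]
    · have : ⌊s⌋₊ = 0 := Nat.floor_eq_zero.2 h1
      simp [Λ, this]
  have hpiece : ∀ k : ℕ, ContinuousOn Λ (Icc (k : ℝ) (k + 1)) := by
    intro k
    have hcont : Continuous (fun t : ℝ => (⇑h)^[k] (α (t - k))) :=
      (h.continuous.iterate k).comp (by fun_prop)
    refine hcont.continuousOn.congr ?_
    intro t ht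
    have e := hΛn k (t - k) (by linarith [ht.1])
    rw [sub_add_cancel] at e
    rw [e, hΛα _ (by linarith [ht.1]) (by linarith [ht.2])]
  have hΛIcc : ∀ k : ℕ, ContinuousOn Λ (Icc (0 : ℝ) k) := by
    intro k
    induction k with
    | zero => simp
    | succ k ih =>
      have : Icc (0 : ℝ) ((k + 1 : ℕ) : ℝ) = Icc 0 (k : ℝ) ∪ Icc (k : ℝ) (k + 1) := by
        rw [Icc_union_Icc_eq_Icc (by positivity) (by linarith)]; push_cast; rfl
      rw [this]
      exact ih.union_of_isClosed (hpiece k) isClosed_Icc isClosed_Icc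
  have hΛc : ContinuousOn Λ (Ici 0) := by
    intro t ht
    obtain ⟨k, hk⟩ := exists_nat_gt t
    have h1 := hΛIcc k t ⟨ht, hk.le⟩
    refine h1.mono_of_mem_nhdsWithin ?_
    have : Icc (0 : ℝ) k = Ici 0 ∩ Iic (k : ℝ) := rfl
    rw [this]
    exact inter_mem self_mem_nhdsWithin (mem_nhdsWithin_of_mem_nhds (Iic_mem_nhds hk))
  have hinj : Function.Injective h := h.injective
  -- reduction of coincidences to [0,1)
  have hred : ∀ a b, 0 ≤ a → a < b → Λ a = Λ b →
      ∃ a' b', 0 ≤ a' ∧ a' < 1 ∧ b' - a' = b - a ∧ Λ a' = Λ b' := by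
    intro a b ha hab he
    have hf := Nat.floor_le ha
    have hf2 := Nat.lt_floor_add_one a
    refine ⟨a - ⌊a⌋₊, b - ⌊a⌋₊, by linarith, by linarith, by ring, ?_⟩
    apply hinj.iterate ⌊a⌋₊
    rw [← hΛn _ _ (by linarith), ← hΛn _ _ (by linarith), sub_add_cancel, sub_add_cancel, he]
  have hshort : ∀ a b, 0 ≤ a → a < b → b ≤ a + 1 → Λ a ≠ Λ b := by
    intro a b ha hab hb he
    obtain ⟨a', b', h1, h2, h3, h4⟩ := hred a b ha hab he
    rw [hΛα a' h1 h2.le] at h4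
    rcases le_or_gt b' 1 with hb1 | hb1
    · rw [hΛα b' (by linarith) hb1] at h4
      have := hαinj _ _ h4
      linarith
    · have e := hΛ (b' - 1) (by linarith)
      rw [sub_add_cancel, hΛα (b' - 1) (by linarith) (by linarith)] at e
      rw [e] at h4
      -- α a' in the closed ball and in the open set h(B)
      have hin := hαB (b' - 1) (by linarith) (by linarith)
      have hopen : IsOpen (h.symm ⁻¹' ball x r) := isOpen_ball.preimage h.symm.continuous
      have hmem : α a' ∈ h.symm ⁻¹' ball x r := by
        rw [h4]; simpa [dist_eq_norm] using hin
      have hcl : α a' ∈ closure (ball x r) := by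
        rw [closure_ball x hr.ne', mem_closedBall, dist_eq_norm]
        exact hαcl a' h1 h2.le
      obtain ⟨z, hz1, hz2⟩ := mem_closure_iff.1 hcl _ hopen hmem
      rw [mem_preimage, mem_ball, dist_eq_norm] at hz1
      rw [mem_ball, dist_eq_norm] at hz2
      have := hfree _ hz1
      simp at this
      linarith
  -- minimal coincidence
  let K : Set (ℝ × ℝ) := (Icc (0 : ℝ) 1 ×ˢ Icc (0 : ℝ) (n + 1)) ∩
    ({p | p.1 + 1 ≤ p.2} ∩ {p | Λ p.1 = Λ p.2})
  have hKc : IsCompact K := by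
    have hbox : IsCompact (Icc (0 : ℝ) 1 ×ˢ Icc (0 : ℝ) (n + 1)) := isCompact_Icc.prod isCompact_Icc
    have h1 : ContinuousOn (fun p : ℝ × ℝ => Λ p.1 - Λ p.2)
        (Icc (0 : ℝ) 1 ×ˢ Icc (0 : ℝ) (n + 1)) :=
      (hΛc.comp (by fun_prop) (fun p hp => hp.1.1)).sub
        (hΛc.comp (by fun_prop) (fun p hp => hp.2.1))
    have h2 := h1.preimage_isClosed_of_isClosed hbox.isClosed (isClosed_singleton (x := (0:ℂ)))
    have h3 : IsClosed {p : ℝ × ℝ | p.1 + 1 ≤ p.2} := isClosed_le (by fun_prop) (by fun_prop)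
    have : K = ((Icc (0 : ℝ) 1 ×ˢ Icc (0 : ℝ) (n + 1)) ∩
      (fun p : ℝ × ℝ => Λ p.1 - Λ p.2) ⁻¹' {0}) ∩ {p | p.1 + 1 ≤ p.2} := by
      ext p
      simp only [K, mem_inter_iff, mem_preimage, mem_singleton_iff, sub_eq_zero, mem_ofPred_eq]
      tauto
    rw [this]
    exact (hbox.of_isClosed_subset h2 inter_subset_left).inter_right h3
  have hn1 : (1 : ℝ) ≤ n := by exact_mod_cast hn
  have hK0 : ((1 / 2 : ℝ), (1 / 2 + n : ℝ)) ∈ K := by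
    refine ⟨⟨⟨by norm_num, by norm_num⟩, ⟨by simp only; linarith, by simp only; linarith⟩⟩,
      by simp only [mem_ofPred_eq]; linarith, ?_⟩
    simp only [mem_ofPred_eq]
    rw [hΛn n _ (by norm_num), hΛα _ (by norm_num) (by norm_num), hαh, hx]
  obtain ⟨⟨s, t⟩, hst, hmin⟩ := hKc.exists_isMinOn ⟨_, hK0⟩
    (f := fun p : ℝ × ℝ => p.2 - p.1) (by fun_prop)
  obtain ⟨⟨⟨hs0, hs1⟩, -⟩, hst1, hst2⟩ := hst
  simp only [mem_ofPred_eq] at hs0 hs1 hst1 hst2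
  have hmin0 := hmin hK0
  simp only [mem_ofPred_eq] at hmin0
  refine brouwer_core h h.continuous hg hfix Λ hΛc hΛ s (t - s) hs0 ?_ ?_ ?_
  · by_contra hcon
    exact hshort s t hs0 (by linarith) (by linarith) hst2
  · rw [hst2]; congr 1; ring
  · intro a b ha hab hb he
    obtain ⟨a', b', h1, h2, h3, h4⟩ := hred a b ha hab he
    have h5 : 1 < b' - a' := by
      by_contra hcon
      exact hshort a' b' h1 (by linarith) (by linarith) h4
    have hmem : (a', b') ∈ K := ⟨⟨⟨h1, h2.le⟩, ⟨by simp only; linarith, by simp only; linarith⟩⟩,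
      by simp only [mem_ofPred_eq]; linarith, h4⟩
    have := hmin hmem
    simp only [mem_ofPred_eq] at this
    linarith

/-! ### Local pushes and Franks' lemma -/

lemma push_local (x y : ℂ) (r : ℝ) (hr : 0 < r) (hxy : ‖y - x‖ ≤ r / 2) :
    ∃ g : ℂ ≃ₜ ℂ, GoodMap g ∧ g x = y ∧ ∀ z, z ∉ ball x r → g z = z := by
  set v : ℂ → ℂ := fun z => ((max 0 (1 - ‖z - x‖ / r) : ℝ) : ℂ) * (y - x) with hv
  have hlip : ∀ p q, ‖v p - v q‖ ≤ 1 / 2 * ‖p - q‖ := by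
    intro p q
    have e : v p - v q = ((max 0 (1 - ‖p - x‖ / r) - max 0 (1 - ‖q - x‖ / r) : ℝ) : ℂ) * (y - x) := by
      simp only [hv]; push_cast; ring
    rw [e, norm_mul, Complex.norm_real, Real.norm_eq_abs]
    have h1 : |max 0 (1 - ‖p - x‖ / r) - max 0 (1 - ‖q - x‖ / r)| ≤ ‖p - q‖ / r := by
      refine (abs_max_sub_max_le_max _ _ _ _).trans ?_
      have h2 : |(1 - ‖p - x‖ / r) - (1 - ‖q - x‖ / r)| ≤ ‖p - q‖ / r := by
        have : (1 - ‖p - x‖ / r) - (1 - ‖q - x‖ / r) = (‖q - x‖ - ‖p - x‖) / r := by ring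
        rw [this, abs_div, abs_of_pos hr]
        gcongr
        have := abs_norm_sub_norm_le (q - x) (p - x)
        rw [show q - x - (p - x) = -(p - q) by ring, norm_neg] at this
        exact this
      simp only [sub_self, abs_zero]
      exact max_le (by positivity) h2
    calc _ ≤ ‖p - q‖ / r * (r / 2) := by gcongr
      _ = _ := by field_simp
  have hc : Continuous v := by
    simp only [hv]; fun_prop
  have hap : ApproximatesLinearOn (fun z => z + v z)
      ((ContinuousLinearEquiv.refl ℝ ℂ : ℂ ≃L[ℝ] ℂ) : ℂ →L[ℝ] ℂ) univ (1/2 : NNReal) := by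
    intro p _ q _
    have := hlip p q
    simp only [ContinuousLinearEquiv.coe_refl, ContinuousLinearMap.coe_id', id_eq]
    rw [show p + v p - (q + v q) - (p - q) = v p - v q by ring]
    simpa using this
  refine ⟨hap.toHomeomorph _ (Or.inr ?_), ?_, ?_, ?_⟩
  · simp
    rw [← NNReal.coe_lt_coe]
    push_cast
    norm_num
  · exact GoodMap.of_lip hlip hc
  · change x + v x = y
    simp [hv]
  · intro z hz
    change z + v z = z
    have : 1 - ‖z - x‖ / r ≤ 0 := by
      rw [mem_ball, dist_eq_norm, not_lt] at hz
      rw [sub_nonpos, le_div_iff₀ hr]; linarith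
    simp [hv, max_eq_left this]

lemma push_disc (D : Set ℂ) (ho : IsOpen D) (hD : IsPreconnected D) (x y : ℂ) (hx : x ∈ D)
    (hy : y ∈ D) : ∃ g : ℂ ≃ₜ ℂ, GoodMap g ∧ g x = y ∧ ∀ z, z ∉ D → g z = z := by
  refine IsPreconnected.induction₂' hD
    (fun x y => ∃ g : ℂ ≃ₜ ℂ, GoodMap g ∧ g x = y ∧ ∀ z, z ∉ D → g z = z) ?_ ?_ hx hy
  · intro x hx
    obtain ⟨r, hr, hb⟩ := Metric.isOpen_iff.1 ho x hx
    refine mem_nhdsWithin_of_mem_nhds ?_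
    filter_upwards [Metric.ball_mem_nhds x (show 0 < r / 4 by positivity)] with y hy
    rw [mem_ball, dist_eq_norm] at hy
    constructor
    · obtain ⟨g, h1, h2, h3⟩ := push_local x y r hr (by linarith)
      exact ⟨g, h1, h2, fun z hz => h3 z fun h => hz (hb h)⟩
    · obtain ⟨g, h1, h2, h3⟩ := push_local y x (r / 2) (by positivity)
        (by rw [norm_sub_rev]; linarith)
      refine ⟨g, h1, h2, fun z hz => h3 z fun h => hz (hb ?_)⟩
      rw [mem_ball, dist_eq_norm] at h ⊢
      calc ‖z - x‖ = ‖(z - y) + (y - x)‖ := by congr 1; ring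
        _ ≤ ‖z - y‖ + ‖y - x‖ := norm_add_le _ _
        _ < r := by linarith
  · rintro x y z - - - ⟨g, h1, h2, h3⟩ ⟨g', h1', h2', h3'⟩
    refine ⟨g.trans g', (GoodMap.comp h1' h1 g.continuous g.injective :), by simp [h2, h2'], ?_⟩
    intro w hw
    simp [h3 w hw, h3' w hw]

lemma push_family {ι : Type*} (s : Finset ι) (D : ι → Set ℂ) (ho : ∀ i, IsOpen (D i))
    (hD : ∀ i, IsPreconnected (D i)) (hdis : ∀ i j, i ≠ j → Disjoint (D i) (D j))
    (e o : ι → ℂ) (he : ∀ i, e i ∈ D i) (hoo : ∀ i, o i ∈ D i) :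
    ∃ g : ℂ ≃ₜ ℂ, GoodMap g ∧ (∀ i ∈ s, g (e i) = o i) ∧ (∀ z, (∀ i ∈ s, z ∉ D i) → g z = z) ∧
      ∀ i, ∀ z, g z ∈ D i ↔ z ∈ D i := by
  classical
  induction s using Finset.induction_on with
  | empty => exact ⟨Homeomorph.refl ℂ, GoodMap.id, by simp, by simp, by simp⟩
  | insert j s hj ih =>
    obtain ⟨g, h1, h2, h3, h4⟩ := ih
    obtain ⟨k, k1, k2, k3⟩ := push_disc (D j) (ho j) (hD j) (g (e j)) (o j)
      ((h4 j _).2 (he j)) (hoo j)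
    have kD : ∀ z, k z ∈ D j ↔ z ∈ D j := by
      intro z
      constructor
      · intro h; by_contra hn
        rw [k3 z hn] at h; exact hn h
      · intro h; by_contra hn
        have := k3 _ hn
        exact hn (by rw [k.injective this]; exact h)
    refine ⟨g.trans k, (GoodMap.comp k1 h1 g.continuous g.injective :), ?_, ?_, ?_⟩
    · intro i hi
      rcases Finset.mem_insert.1 hi with rfl | hi
      · simpa using k2
      · have : i ≠ j := fun h => hj (h ▸ hi)
        simp only [Homeomorph.trans_apply, h2 i hi]
        exact k3 _ fun h => Set.disjoint_left.1 (hdis i j this) (hoo i) h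
    · intro z hz
      simp only [Homeomorph.trans_apply]
      rw [h3 z fun i hi => hz i (Finset.mem_insert_of_mem hi)]
      exact k3 _ (hz j (Finset.mem_insert_self _ _))
    · intro i z
      simp only [Homeomorph.trans_apply]
      by_cases hij : i = j
      · subst hij; rw [kD, h4]
      · by_cases hz : g z ∈ D j
        · have a1 : k (g z) ∉ D i := fun h =>
            Set.disjoint_left.1 (hdis i j hij) h ((kD _).2 hz)
          have a2 : z ∉ D i := fun h =>
            Set.disjoint_left.1 (hdis i j hij) h ((h4 j z).1 hz)
          simp [a1, a2]
        · rw [k3 _ hz, h4]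

theorem franks_perm {ι : Type*} [Fintype ι] [Nonempty ι] (h : ℂ ≃ₜ ℂ) (hg : GoodMap h)
    (hfix : ∀ z, h z ≠ z) (D : ι → Set ℂ) (ho : ∀ i, IsOpen (D i))
    (hD : ∀ i, IsPreconnected (D i)) (hdis : ∀ i j, i ≠ j → Disjoint (D i) (D j))
    (hfree : ∀ i, ∀ z ∈ D i, h z ∉ D i) (σ : Equiv.Perm ι) (o : ι → ℂ) (n : ι → ℕ)
    (hn : ∀ i, 0 < n i) (hoD : ∀ i, o i ∈ D i) (hret : ∀ i, (⇑h)^[n i] (o i) ∈ D (σ i))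
    (hno : ∀ i r, 0 < r → r < n i → ∀ j, (⇑h)^[r] (o i) ∉ D j) : False := by
  classical
  obtain ⟨g, g1, g2, g3, g4⟩ := push_family Finset.univ D ho hD hdis
    (fun i => (⇑h)^[n (σ.symm i)] (o (σ.symm i))) o
    (fun i => by simpa using hret (σ.symm i)) hoD
  set h' : ℂ ≃ₜ ℂ := h.trans g with hh'
  have hfix' : ∀ z, h' z ≠ z := by
    intro z hz
    have hz' : g (h z) = z := hz
    by_cases hc : ∃ i, h z ∈ D i
    · obtain ⟨i, hi⟩ := hc
      have := (g4 i (h z)).2 hi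
      rw [hz'] at this
      exact hfree i z this hi
    · push Not at hc
      rw [g3 _ fun i _ => hc i] at hz'
      exact hfix z hz'
  have step : ∀ i r, r < n i → (⇑h')^[r] (o i) = (⇑h)^[r] (o i) := by
    intro i r
    induction r with
    | zero => intro _; rfl
    | succ r ih =>
      intro hr
      rw [Function.iterate_succ_apply', ih (by omega), Function.iterate_succ_apply']
      refine g3 _ fun j _ => ?_
      have := hno i (r + 1) (by omega) hr j
      rwa [Function.iterate_succ_apply'] at this
  have ret : ∀ i, (⇑h')^[n i] (o i) = o (σ i) := by
    intro i
    obtain ⟨m, hm⟩ : ∃ m, n i = m + 1 := ⟨n i - 1, by have := hn i; omega⟩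
    rw [hm, Function.iterate_succ_apply', step i m (by omega)]
    have := g2 (σ i) (Finset.mem_univ _)
    simp only [Equiv.symm_apply_apply, hm, Function.iterate_succ_apply'] at this
    exact this
  have retk : ∀ k : ℕ, ∀ i, ∃ m, k ≤ m ∧ (⇑h')^[m] (o i) = o ((σ ^ k) i) := by
    intro k
    induction k with
    | zero => intro i; exact ⟨0, le_rfl, rfl⟩
    | succ k ih =>
      intro i
      obtain ⟨m, hm, e⟩ := ih i
      refine ⟨n ((σ ^ k) i) + m, by have := hn ((σ ^ k) i); omega, ?_⟩
      rw [Function.iterate_add_apply, e, ret, pow_succ']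
      rfl
  obtain ⟨i⟩ := ‹Nonempty ι›
  obtain ⟨m, hm, e⟩ := retk (orderOf σ) i
  rw [pow_orderOf_eq_one] at e
  exact brouwer_periodic h' (GoodMap.comp g1 hg h.continuous h.injective :) hfix' m
    (lt_of_lt_of_le (orderOf_pos σ) hm) (o i) e

/-! ### The lift to the universal cover of the complement of a fixed point -/

lemma angVar_eq (γ : ℝ → ℂ) (Λ : ℝ → ℂ) (hc : ContinuousOn Λ (Icc 0 1))
    (he : ∀ t ∈ Icc (0 : ℝ) 1, Complex.exp (Λ t) = γ t) :
    angVar γ = (Λ 1 - Λ 0).im / (2 * Real.pi) := by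
  have hex : ∃ θ : ℝ → ℝ, ContinuousOn θ (Set.Icc 0 1) ∧
      ∀ t ∈ Set.Icc (0 : ℝ) 1, γ t = (‖γ t‖ : ℂ) * Complex.exp ((θ t : ℂ) * Complex.I) := by
    refine ⟨fun t => (Λ t).im, Complex.continuous_im.comp_continuousOn hc, fun t ht => ?_⟩
    rw [← he t ht, Complex.norm_exp, Complex.ofReal_exp, ← Complex.exp_add, Complex.re_add_im]
  rw [angVar, dif_pos hex]
  obtain ⟨h1, h2⟩ := hex.choose_spec
  set θ := hex.choose
  have key : (fun t => ((θ t : ℂ) - (Λ t).im) * Complex.I) 1 =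
      (fun t => ((θ t : ℂ) - (Λ t).im) * Complex.I) 0 := by
    refine exp_const_of_preconnected (c := 1) (isPreconnected_Icc (a := (0 : ℝ)) (b := 1))
      (g := fun t => ((θ t : ℂ) - (Λ t).im) * Complex.I) ?_ ?_
      (show (1 : ℝ) ∈ Icc (0 : ℝ) 1 by simp) (show (0 : ℝ) ∈ Icc (0 : ℝ) 1 by simp)
    · refine ContinuousOn.mul (ContinuousOn.sub ?_ ?_) continuousOn_const
      · exact Complex.continuous_ofReal.comp_continuousOn h1
      · exact Complex.continuous_ofReal.comp_continuousOn
          (Complex.continuous_im.comp_continuousOn hc)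
    · intro t ht
      have e1 := h2 t ht
      have e2 : γ t = (‖γ t‖ : ℂ) * Complex.exp (((Λ t).im : ℂ) * Complex.I) := by
        rw [← he t ht, Complex.norm_exp, Complex.ofReal_exp, ← Complex.exp_add, Complex.re_add_im]
      have hne : (‖γ t‖ : ℂ) ≠ 0 := by
        rw [← he t ht]; simp
      rw [sub_mul, Complex.exp_sub, mul_left_cancel₀ hne (e1.symm.trans e2), div_self]
      exact Complex.exp_ne_zero _
  simp only [mul_eq_mul_right_iff, Complex.I_ne_zero, or_false] at key
  have key' : θ 1 - (Λ 1).im = θ 0 - (Λ 0).im := by exact_mod_cast key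
  rw [Complex.sub_im]
  congr 1
  linarith

lemma lift_isotopy {f : ℂ ≃ₜ ℂ} (I : HIsotopy f) (z' : ℂ) :
    ∃ V : ℝ × ℂ → ℂ, Continuous V ∧ (∀ w, V (0, w) = w) ∧
      (∀ t ∈ Icc (0 : ℝ) 1, ∀ w, Complex.exp (V (t, w)) = I.F t (Complex.exp w + z') - I.F t z') ∧
      ∃ V' : ℝ × ℂ → ℂ, Continuous V' ∧ (∀ t ∈ Icc (0 : ℝ) 1, ∀ w, V (t, V' (t, w)) = w) ∧
        (∀ t ∈ Icc (0 : ℝ) 1, ∀ w, V' (t, V (t, w)) = w) := by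
  have hcz : Continuous fun t : ℝ => I.F t z' :=
    I.cont.comp (continuous_id.prodMk continuous_const)
  obtain ⟨V, hV, hVe, hV0⟩ := lift_homotopy (A := ℂ)
    (fun p => I.F p.1 (Complex.exp p.2 + z') - I.F p.1 z')
    (by
      refine Continuous.sub ?_ (hcz.comp continuous_fst)
      exact I.cont.comp (continuous_fst.prodMk
        ((Complex.continuous_exp.comp continuous_snd).add continuous_const)))
    (by
      intro p
      rw [sub_ne_zero]
      intro h
      have := (I.F p.1).injective h
      exact Complex.exp_ne_zero p.2 (by simp at this)) (fun w => w) continuous_id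
    (by intro a; simp [I.zero])
  obtain ⟨V', hV', hVe', hV0'⟩ := lift_homotopy (A := ℂ)
    (fun p => (I.F p.1).symm (Complex.exp p.2 + I.F p.1 z') - z')
    (by
      refine Continuous.sub ?_ continuous_const
      exact I.cont_symm.comp (continuous_fst.prodMk
        ((Complex.continuous_exp.comp continuous_snd).add (hcz.comp continuous_fst))))
    (by
      intro p
      rw [sub_ne_zero]
      intro h
      have := congrArg (I.F p.1) h
      exact Complex.exp_ne_zero p.2 (by simp at this)) (fun w => w) continuous_id
    (by intro a; simp [I.zero])
  have m0 : (0 : ℝ) ∈ Icc (0 : ℝ) 1 := by simp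
  refine ⟨V, hV, hV0, hVe, V', hV', ?_, ?_⟩
  · intro t ht w
    have := exp_const_of_preconnected (c := 1) (isPreconnected_Icc (a := (0 : ℝ)) (b := 1))
      (g := fun t => V (t, V' (t, w)) - w) (by fun_prop) (by
        intro s hs
        rw [Complex.exp_sub, hVe s hs, hVe' s hs]
        simp) ht m0
    simp only [hV0, hV0', sub_self] at this
    exact sub_eq_zero.1 this
  · intro t ht w
    have := exp_const_of_preconnected (c := 1) (isPreconnected_Icc (a := (0 : ℝ)) (b := 1))
      (g := fun t => V' (t, V (t, w)) - w) (by fun_prop) (by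
        intro s hs
        rw [Complex.exp_sub, hVe' s hs, hVe s hs]
        simp) ht m0
    simp only [hV0, hV0', sub_self] at this
    exact sub_eq_zero.1 this

lemma lift_good (V : ℝ × ℂ → ℂ) (hV : Continuous V) (hV0 : ∀ w, V (0, w) = w)
    (hi : ∀ t ∈ Icc (0 : ℝ) 1, ∀ w w', V (t, w) = V (t, w') → w = w') :
    GoodMap fun w => V (1, w) := by
  set cl : ℝ → ℝ := fun t => max 0 (min 1 t) with hcl
  have hclc : Continuous cl := by fun_prop
  have hclm : ∀ t, cl t ∈ Icc (0 : ℝ) 1 := fun t => ⟨le_max_left _ _, by simp [hcl]⟩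
  have hcle : ∀ t ∈ Icc (0 : ℝ) 1, cl t = t := by
    rintro t ⟨h1, h2⟩; simp [hcl, h1, h2]
  have m0 : (0 : ℝ) ∈ Icc (0 : ℝ) 1 := by simp
  have m1 : (1 : ℝ) ∈ Icc (0 : ℝ) 1 := by simp
  have hA : ∀ p : {p : ℂ × ℂ // p.1 ≠ p.2}, p.1.1 - p.1.2 ≠ 0 := fun p => sub_ne_zero.2 p.2
  obtain ⟨L, hL, hLe, hL0⟩ := lift_homotopy (A := {p : ℂ × ℂ // p.1 ≠ p.2})
    (fun q => (V (cl q.1, q.2.1.1) - V (cl q.1, q.2.1.2)) / (q.2.1.1 - q.2.1.2))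
    (by
      refine Continuous.div (by fun_prop) (by fun_prop) fun q => hA q.2)
    (by
      intro q
      refine div_ne_zero ?_ (hA q.2)
      rw [sub_ne_zero]
      intro h
      exact q.2.2 (hi _ (hclm _) _ _ h)) (fun _ => 0) continuous_const
    (by
      intro p
      simp only [hcle 0 m0, hV0]
      rw [div_self (hA p), Complex.exp_zero])
  refine ⟨fun p => if h : p.1 ≠ p.2 then L (1, ⟨p, h⟩) else 0, ?_, ?_, ?_⟩
  · rw [continuousOn_iff_continuous_domRestrict]
    have : ({p : ℂ × ℂ | p.1 ≠ p.2}.domRestrict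
        fun p => if h : p.1 ≠ p.2 then L (1, ⟨p, h⟩) else 0) = fun p : {p : ℂ × ℂ // p.1 ≠ p.2} => L (1, p) := by
      funext p
      have hp : p.1.1 ≠ p.1.2 := p.2
      simp [Set.domRestrict, hp]
    rw [this]
    fun_prop
  · intro p hp
    have := hLe 1 m1 ⟨p, hp⟩
    simp only [hcle 1 m1] at this
    dsimp only
    rw [dif_pos hp, this, div_mul_cancel₀ _ (sub_ne_zero.2 hp)]
  · intro p hp
    have hp' : p.swap.1 ≠ p.swap.2 := hp.symm
    dsimp only
    rw [dif_pos hp, dif_pos hp']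
    have := exp_const_of_preconnected (c := 1) (isPreconnected_Icc (a := (0 : ℝ)) (b := 1))
      (g := fun t => L (t, ⟨p.swap, hp'⟩) - L (t, ⟨p, hp⟩)) (by fun_prop) (by
        intro s hs
        rw [Complex.exp_sub, hLe s hs, hLe s hs]
        simp only [Prod.fst_swap, Prod.snd_swap]
        rw [← neg_sub (V (cl s, p.1)), ← neg_sub p.1, neg_div_neg_eq, div_self]
        rw [← hLe s hs ⟨p, hp⟩]
        exact Complex.exp_ne_zero _) m1 m0
    simp only [hL0, sub_self] at this
    exact sub_eq_zero.1 this

theorem lift_exists {f : ℂ ≃ₜ ℂ} (I : HIsotopy f) (z' : ℂ) (hz' : f z' = z') :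
    ∃ H : ℂ ≃ₜ ℂ, GoodMap H ∧ (∀ w, Complex.exp (H w) + z' = f (Complex.exp w + z')) ∧
      (∀ w, H (w + 2 * Real.pi * Complex.I) = H w + 2 * Real.pi * Complex.I) ∧
      ∀ w, Enlace I (Complex.exp w + z') z' = (H w - w).im / (2 * Real.pi) := by
  obtain ⟨V, hV, hV0, hVe, V', hV', h1, h2⟩ := lift_isotopy I z'
  have m0 : (0 : ℝ) ∈ Icc (0 : ℝ) 1 := by simp
  have m1 : (1 : ℝ) ∈ Icc (0 : ℝ) 1 := by simp
  refine ⟨⟨⟨fun w => V (1, w), fun w => V' (1, w), h2 1 m1, h1 1 m1⟩, ?_, ?_⟩, ?_, ?_, ?_, ?_⟩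
  · dsimp only; fun_prop
  · dsimp only; fun_prop
  · refine lift_good V hV hV0 fun t ht w w' h => ?_
    rw [← h2 t ht w, h, h2 t ht w']
  · intro w
    have := hVe 1 m1 w
    rw [I.one, hz'] at this
    change Complex.exp (V (1, w)) + z' = _
    rw [this]; ring
  · intro w
    have := exp_const_of_preconnected (c := 1) (isPreconnected_Icc (a := (0 : ℝ)) (b := 1))
      (g := fun t => V (t, w + 2 * Real.pi * Complex.I) - V (t, w)) (by fun_prop) (by
        intro s hs
        rw [Complex.exp_sub, hVe s hs, hVe s hs, Complex.exp_add, Complex.exp_two_pi_mul_I, mul_one,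
          div_self]
        rw [← hVe s hs]
        exact Complex.exp_ne_zero _) m1 m0
    simp only [hV0] at this
    change V (1, _) = V (1, w) + _
    linear_combination this
  · intro w
    have := angVar_eq (fun t => I.F t (Complex.exp w + z') - I.F t z') (fun t => V (t, w))
      (by fun_prop) (fun t ht => hVe t ht w)
    simp only [hV0] at this
    exact this

/-! ### Returns to a free disc -/

/-- `n` is a first return time of `z` to `U`. -/
def FirstRet (f : ℂ → ℂ) (U : Set ℂ) (n : ℕ) (z : ℂ) : Prop :=
  z ∈ U ∧ 0 < n ∧ f^[n] z ∈ U ∧ ∀ r, 0 < r → r < n → f^[r] z ∉ U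

lemma branch_exists (c z' : ℂ) (δ : ℝ) (hz' : z' ∉ ball c δ) :
    ∃ (ℓ : ℂ → ℂ) (b : ℝ), ContinuousOn ℓ (ball c δ) ∧
      (∀ z ∈ ball c δ, Complex.exp (ℓ z) = z - z') ∧
      ∀ z ∈ ball c δ, |(ℓ z).im - b| < Real.pi / 2 := by
  by_cases hδ : 0 < δ
  swap
  · rw [ball_eq_empty.2 (not_lt.1 hδ)]
    exact ⟨fun _ => 0, 0, continuousOn_const, by simp, by simp⟩
  have hd : δ ≤ ‖c - z'‖ := by
    rw [mem_ball, dist_comm, dist_eq_norm, not_lt] at hz'; exact hz'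
  have hcz : c - z' ≠ 0 := norm_pos_iff.1 (lt_of_lt_of_le hδ hd)
  have hq : ∀ z ∈ ball c δ, 0 < ((z - z') / (c - z')).re := by
    intro z hz
    rw [mem_ball, dist_eq_norm] at hz
    have e : (z - z') / (c - z') = 1 + (z - c) / (c - z') := by field_simp; ring
    have h1 : ‖(z - c) / (c - z')‖ < 1 := by
      rw [norm_div, div_lt_one (norm_pos_iff.2 hcz)]; linarith
    have h2 := (abs_le.1 (Complex.abs_re_le_norm ((z - c) / (c - z')))).1
    rw [e, Complex.add_re, Complex.one_re]
    linarith
  refine ⟨fun z => Complex.log ((z - z') / (c - z')) + Complex.log (c - z'),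
    (Complex.log (c - z')).im, ?_, ?_, ?_⟩
  · refine ContinuousOn.add (ContinuousOn.clog (by fun_prop) ?_) continuousOn_const
    intro z hz
    exact Or.inl (hq z hz)
  · intro z hz
    have : (z - z') / (c - z') ≠ 0 := fun h => by have := hq z hz; simp [h] at this
    rw [Complex.exp_add, Complex.exp_log this, Complex.exp_log hcz, div_mul_cancel₀ _ hcz]
  · intro z hz
    simp only [Complex.add_im, add_sub_cancel_right, Complex.log_im]
    exact Complex.abs_arg_lt_pi_div_two_iff.2 (Or.inl (hq z hz))

lemma int_of_abs_lt (m : ℤ) (h : |2 * Real.pi * m| < 2 * Real.pi) : m = 0 := by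
  have hp : 0 < 2 * Real.pi := by positivity
  rw [abs_mul, abs_of_pos hp] at h
  have : |(m : ℝ)| < 1 := by
    by_contra hn
    push Not at hn
    nlinarith
  have h2 : |m| < 1 := by exact_mod_cast this
  exact Int.abs_lt_one_iff.1 h2

section chain

variable {f H : ℂ ≃ₜ ℂ} {z' c : ℂ} {δ b : ℝ} {ℓ : ℂ → ℂ}

lemma period_int (hT : ∀ w, H (w + 2 * Real.pi * Complex.I) = H w + 2 * Real.pi * Complex.I)
    (m : ℤ) (w : ℂ) :
    H (w + m * (2 * Real.pi * Complex.I)) = H w + m * (2 * Real.pi * Complex.I) := by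
  induction m using Int.induction_on generalizing w with
  | zero => simp
  | succ i ih =>
    have := hT (w + i * (2 * Real.pi * Complex.I))
    push_cast at ih ⊢
    rw [show w + ((i : ℂ) + 1) * (2 * Real.pi * Complex.I) =
      w + i * (2 * Real.pi * Complex.I) + 2 * Real.pi * Complex.I by ring, this, ih]
    ring
  | pred i ih =>
    have := hT (w + (-(i : ℂ) - 1) * (2 * Real.pi * Complex.I))
    push_cast at ih ⊢
    rw [show w + (-(i : ℂ) - 1) * (2 * Real.pi * Complex.I) + 2 * Real.pi * Complex.I =
      w + (-(i : ℂ)) * (2 * Real.pi * Complex.I) by ring, ih] at this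
    linear_combination -this

lemma iter_period (hT : ∀ w, H (w + 2 * Real.pi * Complex.I) = H w + 2 * Real.pi * Complex.I)
    (m : ℤ) (n : ℕ) (w : ℂ) :
    (⇑H)^[n] (w + m * (2 * Real.pi * Complex.I)) =
      (⇑H)^[n] w + m * (2 * Real.pi * Complex.I) := by
  induction n with
  | zero => rfl
  | succ n ih => rw [Function.iterate_succ_apply', ih, period_int hT, Function.iterate_succ_apply']

lemma iter_proj (hp : ∀ w, Complex.exp (H w) + z' = f (Complex.exp w + z')) (n : ℕ) (w : ℂ) :
    Complex.exp ((⇑H)^[n] w) + z' = (⇑f)^[n] (Complex.exp w + z') := by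
  induction n with
  | zero => rfl
  | succ n ih => rw [Function.iterate_succ_apply', hp, ih, Function.iterate_succ_apply']

theorem chain_false (hg : GoodMap H)
    (hp : ∀ w, Complex.exp (H w) + z' = f (Complex.exp w + z'))
    (hT : ∀ w, H (w + 2 * Real.pi * Complex.I) = H w + 2 * Real.pi * Complex.I)
    (hfree : ∀ z ∈ ball c δ, f z ∉ ball c δ)
    (hℓc : ContinuousOn ℓ (ball c δ)) (hℓe : ∀ z ∈ ball c δ, Complex.exp (ℓ z) = z - z')
    (hℓb : ∀ z ∈ ball c δ, |(ℓ z).im - b| < Real.pi / 2)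
    (k : ℤ) (hk : ∀ w, H w ≠ w + k * (2 * Real.pi * Complex.I))
    (z₁ z₀ : ℂ) (n₁ n₀ : ℕ) (h₁ : FirstRet f (ball c δ) n₁ z₁) (h₀ : FirstRet f (ball c δ) n₀ z₀)
    (a₁ a₀ : ℤ)
    (e₁ : (⇑H)^[n₁] (ℓ z₁) = ℓ ((⇑f)^[n₁] z₁) + a₁ * (2 * Real.pi * Complex.I))
    (e₀ : (⇑H)^[n₀] (ℓ z₀) = ℓ ((⇑f)^[n₀] z₀) + a₀ * (2 * Real.pi * Complex.I))
    (hs₁ : 0 ≤ a₁ - k * n₁) (hs₀ : a₀ - k * n₀ < 0) : False := by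
  obtain ⟨p, hpp⟩ := Int.eq_ofNat_of_zero_le hs₁
  obtain ⟨q, hqq⟩ := Int.eq_ofNat_of_zero_le (show 0 ≤ -(a₀ - k * n₀) by omega)
  have hq0 : 0 < q := by omega
  have hpi := Real.pi_pos
  set T : ℂ := 2 * Real.pi * Complex.I with hTdef
  have hTim : ∀ m : ℤ, ((m : ℂ) * T).im = 2 * Real.pi * m := by
    intro m; simp [hTdef, Complex.mul_im]; ring
  have hTe : ∀ m : ℤ, Complex.exp ((m : ℂ) * T) = 1 := fun m => Complex.exp_int_mul_two_pi_mul_I m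
  set h : ℂ ≃ₜ ℂ := H.trans (Homeomorph.addRight (-(k * T))) with hh
  have hap : ∀ w, h w = H w + -(k * T) := fun w => rfl
  have hgood : GoodMap h := hg.add_const _
  have hproj : ∀ w, Complex.exp (h w) + z' = f (Complex.exp w + z') := by
    intro w
    have := hTe (-k)
    push_cast at this
    rw [hap, ← neg_mul, Complex.exp_add, this, mul_one, hp]
  have hiter : ∀ n w, (⇑h)^[n] w = (⇑H)^[n] w + ((-k * n : ℤ) : ℂ) * T := by
    intro n w
    induction n with
    | zero => simp
    | succ n ih =>
      rw [Function.iterate_succ_apply', ih, hap, period_int hT, Function.iterate_succ_apply']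
      push_cast; ring
  have hfix : ∀ w, h w ≠ w := by
    intro w hw
    rw [hap] at hw
    exact hk w (by linear_combination hw)
  set D : ℤ → Set ℂ := fun j =>
    {w | Complex.exp w + z' ∈ ball c δ ∧ |w.im - b - 2 * Real.pi * j| < Real.pi / 2} with hD
  have hDim : ∀ j, D j = (fun z => ℓ z + j * T) '' ball c δ := by
    intro j
    ext w
    constructor
    · rintro ⟨hw1, hw2⟩
      refine ⟨Complex.exp w + z', hw1, ?_⟩
      have h1 := hℓe _ hw1
      rw [add_sub_cancel_right, Complex.exp_eq_exp_iff_exists_int] at h1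
      obtain ⟨m, hm⟩ := h1
      have h2 := hℓb _ hw1
      have h3 : (ℓ (Complex.exp w + z')).im = w.im + 2 * Real.pi * m := by
        rw [hm, Complex.add_im, ← hTdef, hTim]
      rw [h3] at h2
      have h4 : m + j = 0 := by
        apply int_of_abs_lt
        rw [abs_lt] at *
        push_cast
        constructor <;> nlinarith
      have h5 : (j : ℂ) = -m := by
        have : j = -m := by omega
        rw [this]; push_cast; rfl
      change ℓ (Complex.exp w + z') + j * T = w
      rw [hm, h5]; ring
    · rintro ⟨z, hz, rfl⟩
      refine ⟨?_, ?_⟩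
      · change Complex.exp (ℓ z + j * T) + z' ∈ _
        rw [Complex.exp_add, hTe, mul_one, hℓe z hz]; simpa using hz
      · have := hℓb z hz
        change |(ℓ z + j * T).im - b - 2 * Real.pi * j| < _
        rw [Complex.add_im, hTim]
        rwa [show (ℓ z).im + 2 * Real.pi * j - b - 2 * Real.pi * j = (ℓ z).im - b by ring]
  have hDo : ∀ j, IsOpen (D j) := by
    intro j
    refine IsOpen.inter ?_ ?_
    · exact isOpen_ball.preimage (by fun_prop : Continuous fun w => Complex.exp w + z')
    · exact isOpen_lt (((Complex.continuous_im.sub continuous_const).sub continuous_const).abs)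
        continuous_const
  have hDc : ∀ j, IsPreconnected (D j) := by
    intro j
    rw [hDim]
    exact ((convex_ball c δ).isPreconnected).image _ (hℓc.add continuousOn_const)
  have hDd : ∀ i j, i ≠ j → Disjoint (D i) (D j) := by
    intro i j hij
    rw [Set.disjoint_left]
    rintro w ⟨-, h1⟩ ⟨-, h2⟩
    apply hij
    have : i - j = 0 := by
      apply int_of_abs_lt
      rw [abs_lt] at *
      push_cast
      constructor <;> nlinarith
    omega
  have hmem : ∀ z ∈ ball c δ, ∀ j : ℤ, ℓ z + j * T ∈ D j := by
    intro z hz j; rw [hDim]; exact ⟨z, hz, rfl⟩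
  have hDfree : ∀ i, ∀ w ∈ D i, h w ∉ D i := by
    rintro i w ⟨h1, -⟩ ⟨h2, -⟩
    rw [hproj] at h2
    exact hfree _ h1 h2
  have hpt : ∀ z ∈ ball c δ, ∀ j : ℤ, Complex.exp (ℓ z + j * T) + z' = z := by
    intro z hz j
    rw [Complex.exp_add, hTe, mul_one, hℓe z hz]; ring
  -- the permutation
  let σ : Equiv.Perm (Fin (p + q)) :=
    { toFun := fun j => if hj : j.1 < q then ⟨j.1 + p, by omega⟩ else ⟨j.1 - q, by omega⟩
      invFun := fun j => if hj : j.1 < p then ⟨j.1 + q, by omega⟩ else ⟨j.1 - p, by omega⟩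
      left_inv := by
        intro j
        by_cases hj : j.1 < q
        · have : ¬ (j.1 + p < p) := by omega
          simp [hj]
        · have : j.1 - q < p := by omega
          simp [hj, this]
          ext; simp; omega
      right_inv := by
        intro j
        by_cases hj : j.1 < p
        · have : ¬ (j.1 + q < q) := by omega
          simp [hj]
        · have : j.1 - p < q := by omega
          simp [hj, this]
          ext; simp; omega }
  have : Nonempty (Fin (p + q)) := ⟨⟨0, by omega⟩⟩
  refine franks_perm (ι := Fin (p + q)) h hgood hfix (fun j => D (j.1 : ℤ)) (fun j => hDo _)
    (fun j => hDc _) (fun i j hij => hDd _ _ (fun e => hij (Fin.ext (by exact_mod_cast e))))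
    (fun i => hDfree _) σ
    (fun j => if j.1 < q then ℓ z₁ + ((j.1 : ℤ) : ℂ) * T else ℓ z₀ + ((j.1 : ℤ) : ℂ) * T)
    (fun j => if j.1 < q then n₁ else n₀) ?_ ?_ ?_ ?_
  · intro j
    split_ifs
    · exact h₁.2.1
    · exact h₀.2.1
  · intro j
    split_ifs
    · exact hmem _ h₁.1 _
    · exact hmem _ h₀.1 _
  · intro j
    by_cases hj : j.1 < q
    · have hσ : (((σ j).1 : ℕ) : ℤ) = j.1 + (a₁ - k * n₁) := by
        rw [hpp]; simp [σ, hj]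
      rw [if_pos hj, if_pos hj, hσ, hiter, iter_period hT, e₁]
      have := hmem _ h₁.2.2.1 (j.1 + (a₁ - k * n₁))
      convert this using 1
      push_cast; ring
    · have hσ : (((σ j).1 : ℕ) : ℤ) = j.1 + (a₀ - k * n₀) := by
        have : (a₀ - k * n₀) = - (q : ℤ) := by omega
        rw [this]; simp [σ, hj]; omega
      rw [if_neg hj, if_neg hj, hσ, hiter, iter_period hT, e₀]
      have := hmem _ h₀.2.2.1 (j.1 + (a₀ - k * n₀))
      convert this using 1
      push_cast; ring
  · intro i r hr0 hr j
    rintro ⟨hin, -⟩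
    rw [iter_proj hproj] at hin
    by_cases hi : i.1 < q
    · rw [if_pos hi] at hr hin
      rw [hpt _ h₁.1] at hin
      exact h₁.2.2.2 r hr0 hr hin
    · rw [if_neg hi] at hr hin
      rw [hpt _ h₀.1] at hin
      exact h₀.2.2.2 r hr0 hr hin

end chain

theorem alpha_exists {f : ℂ ≃ₜ ℂ} (I : HIsotopy f) (k : ℕ) (hk0 : 0 < k)
    (hM : ∀ z ∈ FixPts ⇑f, ∀ z' ∈ FixPts ⇑f, z ≠ z' → |Enlace I z z'| < k) (z' : ℂ)
    (hz' : f z' = z') (c : ℂ) (δ : ℝ) (hfree : ∀ z ∈ ball c δ, f z ∉ ball c δ) :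
    ∃ A : ℕ → ℂ → ℤ,
      (∀ n z, z ∈ ball c δ → (⇑f)^[n] z ∈ ball c δ →
        |∑ r ∈ Finset.range n, Enlace I ((⇑f)^[r] z) z' - A n z| ≤ 1 / 2) ∧
      (∀ n m z, z ∈ ball c δ → (⇑f)^[m] z ∈ ball c δ → (⇑f)^[n] ((⇑f)^[m] z) ∈ ball c δ →
        A (n + m) z = A m z + A n ((⇑f)^[m] z)) ∧
      ((∃ n z, FirstRet f (ball c δ) n z ∧ A n z = 0) →
        ∀ n z, FirstRet f (ball c δ) n z → |A n z| ≤ k * n) := by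
  have hzU : z' ∉ ball c δ := fun h => hfree z' h (by rwa [hz'])
  obtain ⟨ℓ, b, hℓc, hℓe, hℓb⟩ := branch_exists c z' δ hzU
  obtain ⟨H, hg, hp, hT, hE⟩ := lift_exists I z' hz'
  have hpi := Real.pi_pos
  have hTim : ∀ m : ℤ, ((m : ℂ) * (2 * Real.pi * Complex.I)).im = 2 * Real.pi * m := by
    intro m; simp [Complex.mul_im]; ring
  have hpt : ∀ z ∈ ball c δ, Complex.exp (ℓ z) + z' = z := by
    intro z hz; rw [hℓe z hz]; ring
  have hex : ∀ n z, ∃ m : ℤ, z ∈ ball c δ → (⇑f)^[n] z ∈ ball c δ →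
      (⇑H)^[n] (ℓ z) = ℓ ((⇑f)^[n] z) + m * (2 * Real.pi * Complex.I) := by
    intro n z
    by_cases h : z ∈ ball c δ ∧ (⇑f)^[n] z ∈ ball c δ
    · have h1 := iter_proj hp n (ℓ z)
      rw [hpt z h.1, ← hpt _ h.2, add_left_inj, Complex.exp_eq_exp_iff_exists_int] at h1
      obtain ⟨m, hm⟩ := h1
      refine ⟨m, fun _ _ => ?_⟩
      rw [hm]
    · exact ⟨0, fun h1 h2 => (h ⟨h1, h2⟩).elim⟩
  choose A hA using hex
  have hkfix : ∀ j : ℤ, |j| = k → ∀ w, H w ≠ w + j * (2 * Real.pi * Complex.I) := by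
    intro j hj w hw
    have h1 : f (Complex.exp w + z') = Complex.exp w + z' := by
      rw [← hp, hw, Complex.exp_add, Complex.exp_int_mul_two_pi_mul_I, mul_one]
    have h2 := hM (Complex.exp w + z') h1 z' hz' (by simp)
    rw [hE, hw, add_sub_cancel_left, hTim, mul_div_cancel_left₀ _ (by positivity)] at h2
    have h3 : (|j| : ℝ) = k := by exact_mod_cast hj
    linarith
  refine ⟨A, ?_, ?_, ?_⟩
  · intro n z hz hn
    have hs : ∀ n, ∑ r ∈ Finset.range n, Enlace I ((⇑f)^[r] z) z' =
        ((⇑H)^[n] (ℓ z) - ℓ z).im / (2 * Real.pi) := by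
      intro n
      induction n with
      | zero => simp
      | succ n ih =>
        rw [Finset.sum_range_succ, ih]
        have h1 := hE ((⇑H)^[n] (ℓ z))
        rw [iter_proj hp, hpt z hz] at h1
        rw [h1, Function.iterate_succ_apply']
        simp only [Complex.sub_im]
        ring
    rw [hs, hA n z hz hn]
    have h1 := hℓb _ hz
    have h2 := hℓb _ hn
    rw [Complex.sub_im, Complex.add_im, hTim]
    have : ((ℓ ((⇑f)^[n] z)).im + 2 * Real.pi * (A n z) - (ℓ z).im) / (2 * Real.pi) - A n z =
      ((ℓ ((⇑f)^[n] z)).im - (ℓ z).im) / (2 * Real.pi) := by field_simp; ring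
    rw [this, abs_div, abs_of_pos (show 0 < 2 * Real.pi by positivity), div_le_iff₀ (by positivity)]
    rw [abs_lt] at h1 h2
    rw [abs_le]
    constructor <;> linarith
  · intro n m z hz hm hn
    have h1 := hA m z hz hm
    have h2 := hA n _ hm hn
    have h3 := hA (n + m) z hz (by rwa [Function.iterate_add_apply])
    rw [Function.iterate_add_apply, h1, iter_period hT, h2, Function.iterate_add_apply] at h3
    have h4 := congrArg Complex.im h3
    simp only [Complex.add_im, hTim] at h4
    have h5 : 2 * Real.pi * ((A n ((⇑f)^[m] z) : ℝ) + A m z) = 2 * Real.pi * A (n + m) z := by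
      linarith
    have h6 := mul_left_cancel₀ (by positivity) h5
    have h7 : A n ((⇑f)^[m] z) + A m z = A (n + m) z := by exact_mod_cast h6
    linarith
  · rintro ⟨n₀, z₀, h₀, e₀⟩ n z hz
    have H0 := hA n₀ z₀ h₀.1 h₀.2.2.1
    have H1 := hA n z hz.1 hz.2.2.1
    have hn₀ : (1 : ℤ) ≤ n₀ := by exact_mod_cast h₀.2.1
    have hn : (1 : ℤ) ≤ n := by exact_mod_cast hz.2.1
    rw [abs_le]
    have hk1 : (1 : ℤ) ≤ k := by exact_mod_cast hk0
    constructor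
    · by_contra hn
      push Not at hn
      refine chain_false hg hp hT hfree hℓc hℓe hℓb (-k) (hkfix _ (by simp)) z₀ z n₀ n h₀ hz _ _
        H0 H1 ?_ ?_
      · rw [e₀]; nlinarith
      · linarith
    · by_contra hn
      push Not at hn
      refine chain_false hg hp hT hfree hℓc hℓe hℓb k (hkfix _ (by simp)) z z₀ n n₀ hz h₀ _ _
        H1 H0 ?_ ?_
      · linarith
      · rw [e₀]; nlinarith

/-! ### Fixed points far away turn little around a compact set -/

lemma far_estimate {f : ℂ ≃ₜ ℂ} (I : HIsotopy f) (hA : Adapted I) (C η : ℝ) (hη : 0 < η) :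
    ∃ R : ℝ, ∀ z', f z' = z' → R < ‖z'‖ → ∀ z, ‖z‖ ≤ C → |Enlace I z z'| < η := by
  have m0 : (0 : ℝ) ∈ Icc (0 : ℝ) 1 := by simp
  have m1 : (1 : ℝ) ∈ Icc (0 : ℝ) 1 := by simp
  obtain ⟨K, hK, hKT⟩ := hA
  obtain ⟨RK, hRK⟩ := hK.isBounded.exists_norm_le
  obtain ⟨B, hB⟩ := (((isCompact_Icc (a := (0 : ℝ)) (b := 1)).prod
    (isCompact_closedBall (0 : ℂ) C)).image I.cont).isBounded.exists_norm_le
  obtain ⟨s, hs0, hs⟩ : ∃ s : ℝ, 0 < s ∧ ∀ q : ℂ, ‖q‖ < s →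
      (1 - q) ∈ Complex.slitPlane ∧ |(1 - q).arg| < η := by
    have hc : ContinuousAt (fun q : ℂ => (1 - q).arg) 0 := by
      refine ContinuousAt.comp (g := Complex.arg) (f := fun q : ℂ => 1 - q) ?_ (by fun_prop)
      exact Complex.continuousAt_arg (by simp)
    obtain ⟨s, hs0, hs⟩ := Metric.continuousAt_iff.1 hc η hη
    refine ⟨min s 1, by positivity, fun q hq => ⟨?_, ?_⟩⟩
    · have : ‖-q‖ < 1 := by rw [norm_neg]; exact lt_of_lt_of_le hq (min_le_right _ _)
      simpa [sub_eq_add_neg] using Complex.mem_slitPlane_of_norm_lt_one this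
    · have := hs (x := q) (by simpa using lt_of_lt_of_le hq (min_le_left _ _))
      simpa [Real.dist_eq] using this
  obtain ⟨R, hR⟩ := (((isCompact_Icc (a := (0 : ℝ)) (b := 1)).prod
    (isCompact_closedBall (0 : ℂ) (max (B / s) 0))).image I.cont_symm).isBounded.exists_norm_le
  refine ⟨max R RK, fun z' hz' hfar z hz => ?_⟩
  have hbig : ∀ t ∈ Icc (0 : ℝ) 1, max (B / s) 0 < ‖I.F t z'‖ := by
    intro t ht
    by_contra hn
    push Not at hn
    have := hR ((I.F t).symm (I.F t z')) ⟨(t, I.F t z'), ⟨ht, by simpa using hn⟩, rfl⟩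
    rw [Homeomorph.symm_apply_apply] at this
    exact absurd (lt_of_le_of_lt (le_max_left _ _) hfar) (not_lt.2 this)
  have hne : ∀ t ∈ Icc (0 : ℝ) 1, I.F t z' ≠ 0 := fun t ht =>
    norm_pos_iff.1 (lt_of_le_of_lt (le_max_right _ _) (hbig t ht))
  have hq : ∀ t ∈ Icc (0 : ℝ) 1, ‖I.F t z / I.F t z'‖ < s := by
    intro t ht
    have h1 := hB (I.F t z) ⟨(t, z), ⟨ht, by simpa using hz⟩, rfl⟩
    have h2 := lt_of_le_of_lt (le_max_left _ _) (hbig t ht)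
    rw [norm_div, div_lt_iff₀ (norm_pos_iff.2 (hne t ht))]
    rw [div_lt_iff₀ hs0] at h2
    linarith
  have hc1 : Continuous fun t => I.F t z := I.cont.comp (continuous_id.prodMk continuous_const)
  have hc2 : Continuous fun t => I.F t z' := I.cont.comp (continuous_id.prodMk continuous_const)
  obtain ⟨φ, hφ, hφe⟩ := lift_convex (Icc (0 : ℝ) 1) (convex_Icc 0 1) (fun t => I.F t z')
    hc2.continuousOn hne
  have hT : Tourne I z' = 0 := by
    refine hKT z' ⟨hz', fun h => ?_⟩
    exact absurd (lt_of_le_of_lt (le_max_right _ _) hfar) (not_lt.2 (hRK z' h))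
  have hT' := angVar_eq (fun t => I.F t z') φ hφ hφe
  have hE := angVar_eq (fun t => I.F t z - I.F t z')
    (fun t => φ t + Real.pi * Complex.I + Complex.log (1 - I.F t z / I.F t z')) (by
      refine (hφ.add continuousOn_const).add (ContinuousOn.clog ?_ ?_)
      · exact continuousOn_const.sub (hc1.continuousOn.div hc2.continuousOn hne)
      · exact fun t ht => (hs _ (hq t ht)).1) (by
      intro t ht
      have := hne t ht
      rw [Complex.exp_add, Complex.exp_add, Complex.exp_pi_mul_I, hφe t ht,
        Complex.exp_log (Complex.slitPlane_ne_zero (hs _ (hq t ht)).1)]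
      field_simp
      ring)
  change Enlace I z z' = _ at hE
  change Tourne I z' = _ at hT'
  rw [hT] at hT'
  have a0 := (hs _ (hq 0 m0)).2
  have a1 := (hs _ (hq 1 m1)).2
  have hpi : 3 < Real.pi := Real.pi_gt_three
  have e : Enlace I z z' = ((1 - I.F 1 z / I.F 1 z').arg - (1 - I.F 0 z / I.F 0 z').arg)
      / (2 * Real.pi) := by
    rw [hE]
    have : ∀ x y u v w : ℂ, (x + u + v - (y + u + w)).im = (x - y).im + (v.im - w.im) := by
      intros; simp; ring
    rw [this, Complex.log_im, Complex.log_im]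
    have h0 : (φ 1 - φ 0).im = 0 := by
      rcases div_eq_zero_iff.1 hT'.symm with h | h
      · exact h
      · exfalso; linarith
    rw [h0, zero_add]
  rw [e, abs_div, abs_of_pos (show 0 < 2 * Real.pi by positivity), div_lt_iff₀ (by positivity)]
  rw [abs_lt] at *
  constructor <;> nlinarith

/-! ### A maximal ergodic inequality -/

/-- Garsia's maximal function. -/
def garsiaMax (T : ℂ → ℂ) (g : ℂ → ℝ) : ℕ → ℂ → ℝ
  | 0, _ => 0
  | N + 1, z => max 0 (g z + garsiaMax T g N (T z))

lemma garsiaMax_nonneg (T : ℂ → ℂ) (g : ℂ → ℝ) (N : ℕ) (z : ℂ) : 0 ≤ garsiaMax T g N z := by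
  cases N with
  | zero => exact le_rfl
  | succ N => exact le_max_left _ _

lemma garsiaMax_mono (T : ℂ → ℂ) (g : ℂ → ℝ) (N : ℕ) (z : ℂ) :
    garsiaMax T g N z ≤ garsiaMax T g (N + 1) z := by
  induction N generalizing z with
  | zero => exact garsiaMax_nonneg _ _ _ _
  | succ N ih =>
    rw [garsiaMax, garsiaMax]
    exact max_le_max le_rfl (by linarith [ih (T z)])

lemma garsiaMax_sum (T : ℂ → ℂ) (g : ℂ → ℝ) (n : ℕ) (z : ℂ) :
    ∑ r ∈ Finset.range n, g (T^[r] z) ≤ garsiaMax T g n z := by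
  induction n generalizing z with
  | zero => simp [garsiaMax]
  | succ n ih =>
    rw [Finset.sum_range_succ', garsiaMax]
    refine le_trans ?_ (le_max_right _ _)
    simp only [Function.iterate_succ_apply, Function.iterate_zero, id_eq]
    linarith [ih (T z)]

lemma garsiaMax_meas (T : ℂ → ℂ) (hT : Measurable T) (g : ℂ → ℝ) (hg : Measurable g) (N : ℕ) :
    Measurable (garsiaMax T g N) := by
  induction N with
  | zero => exact measurable_const
  | succ N ih =>
    exact measurable_const.max (hg.add (ih.comp hT))

lemma garsiaMax_bdd (T : ℂ → ℂ) (g : ℂ → ℝ) (hg : ∀ z, g z ≤ 1) (N : ℕ) (z : ℂ) :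
    garsiaMax T g N z ≤ N := by
  induction N generalizing z with
  | zero => simp [garsiaMax]
  | succ N ih =>
    rw [garsiaMax]
    push_cast
    exact max_le (by positivity) (by linarith [hg z, ih (T z)])

lemma garsiaMax_ineq (T : ℂ → ℂ) (g : ℂ → ℝ) (N : ℕ) (z : ℂ) :
    garsiaMax T g N z ≤ {z | 0 < garsiaMax T g N z}.indicator g z + garsiaMax T g N (T z) := by
  by_cases h : 0 < garsiaMax T g N z
  · rw [indicator_of_mem (by exact h)]
    cases N with
    | zero => exact absurd h (lt_irrefl _)
    | succ N =>
      have h1 := garsiaMax_mono T g N (T z)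
      rw [garsiaMax] at h
      have h2 : 0 < g z + garsiaMax T g N (T z) := by
        rcases lt_max_iff.1 h with h | h
        · exact absurd h (lt_irrefl _)
        · exact h
      calc garsiaMax T g (N + 1) z = g z + garsiaMax T g N (T z) := by
            rw [garsiaMax, max_eq_right h2.le]
        _ ≤ _ := by linarith
  · rw [indicator_of_notMem (by exact h), zero_add]
    exact (not_lt.1 h).trans (garsiaMax_nonneg _ _ _ _)

lemma maximal_ineq (μ : Measure ℂ) [IsFiniteMeasure μ] (T : ℂ → ℂ) (hT : MeasurePreserving T μ μ)
    (W : Set ℂ) (hW : MeasurableSet W) (c : ℝ) (hc : 0 < c) :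
    μ {z | ∃ n : ℕ, c * n < ∑ r ∈ Finset.range n, W.indicator (fun _ => (1 : ℝ)) (T^[r] z)} ≤
      ENNReal.ofReal (μ.real W / c) := by
  set g : ℂ → ℝ := fun z => W.indicator (fun _ => (1 : ℝ)) z - c with hg
  have hgm : Measurable g := (measurable_const.indicator hW).sub measurable_const
  have hg1 : ∀ z, g z ≤ 1 := by
    intro z
    have : W.indicator (fun _ => (1 : ℝ)) z ≤ 1 := by
      by_cases h : z ∈ W <;> simp [h]
    simp only [hg]; linarith
  have hgi : Integrable g μ := by
    refine Integrable.sub ?_ (integrable_const c)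
    exact (integrable_const (1 : ℝ)).indicator hW
  have key : ∀ N, μ.real {z | 0 < garsiaMax T g N z} ≤ μ.real W / c := by
    intro N
    set E := {z | 0 < garsiaMax T g N z} with hE
    have hMm := garsiaMax_meas T hT.measurable g hgm N
    have hEm : MeasurableSet E := measurableSet_lt measurable_const hMm
    have hMi : Integrable (garsiaMax T g N) μ := by
      refine Integrable.of_bound hMm.aestronglyMeasurable N ?_
      filter_upwards with z
      rw [Real.norm_eq_abs, abs_of_nonneg (garsiaMax_nonneg _ _ _ _)]
      exact garsiaMax_bdd T g hg1 N z
    have hMTi : Integrable (fun z => garsiaMax T g N (T z)) μ := hT.integrable_comp_of_integrable hMi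
    have h1 : ∫ z, garsiaMax T g N z ∂μ ≤
        ∫ z, (E.indicator g z + garsiaMax T g N (T z)) ∂μ :=
      integral_mono hMi ((hgi.indicator hEm).add hMTi) fun z => garsiaMax_ineq T g N z
    rw [integral_add (hgi.indicator hEm) hMTi] at h1
    have h2 : ∫ z, garsiaMax T g N (T z) ∂μ = ∫ z, garsiaMax T g N z ∂μ := by
      have := integral_map (μ := μ) hT.measurable.aemeasurable
        (f := garsiaMax T g N) (by rw [hT.map_eq]; exact hMm.aestronglyMeasurable)
      rw [hT.map_eq] at this
      exact this.symm
    have h3 : 0 ≤ ∫ z, E.indicator g z ∂μ := by linarith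
    have h4 : ∫ z, E.indicator g z ∂μ ≤ ∫ z, (W.indicator (fun _ => (1 : ℝ)) z -
        E.indicator (fun _ => c) z) ∂μ := by
      refine integral_mono (hgi.indicator hEm) ?_ ?_
      · exact ((integrable_const (1 : ℝ)).indicator hW).sub ((integrable_const c).indicator hEm)
      · intro z
        by_cases hz : z ∈ E
        · simp [hz, hg]
        · simp only [hz, not_false_eq_true, indicator_of_notMem, sub_zero]
          exact indicator_nonneg (fun _ _ => zero_le_one) z
    rw [integral_sub ((integrable_const (1 : ℝ)).indicator hW)
      ((integrable_const c).indicator hEm), integral_indicator_const _ hW,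
      integral_indicator_const _ hEm] at h4
    simp only [smul_eq_mul, mul_one] at h4
    rw [le_div_iff₀ hc]
    linarith
  have hsub : {z | ∃ n : ℕ, c * n < ∑ r ∈ Finset.range n,
      W.indicator (fun _ => (1 : ℝ)) (T^[r] z)} ⊆ ⋃ N, {z | 0 < garsiaMax T g N z} := by
    rintro z ⟨n, hn⟩
    refine mem_iUnion.2 ⟨n, ?_⟩
    refine lt_of_lt_of_le ?_ (garsiaMax_sum T g n z)
    simp only [hg, Finset.sum_sub_distrib, Finset.sum_const, Finset.card_range, nsmul_eq_mul]
    linarith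
  refine (measure_mono hsub).trans ?_
  have hmono : Monotone fun N => {z | 0 < garsiaMax T g N z} :=
    monotone_nat_of_le_succ fun N z hz => lt_of_lt_of_le hz (garsiaMax_mono T g N z)
  rw [hmono.measure_iUnion]
  refine iSup_le fun N => ?_
  rw [← ENNReal.ofReal_toReal (measure_ne_top μ _)]
  exact ENNReal.ofReal_le_ofReal (key N)

/-! ### Towers over bad returns -/

/-- The return is long or the orbit segment goes far away. -/
def BadRet (f : ℂ → ℂ) (m n : ℕ) (z : ℂ) : Prop :=
  m < n ∨ ∃ r, r < n ∧ (m : ℝ) < ‖f^[r] z‖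

/-- The tower over the bad returns. -/
def Tower (f : ℂ → ℂ) (U : Set ℂ) (m : ℕ) : Set ℂ :=
  {y | ∃ n r z, r < n ∧ f^[r] z = y ∧ FirstRet f U n z ∧ BadRet f m n z}

lemma Tower_measurable (f : ℂ ≃ₜ ℂ) (U : Set ℂ) (hU : MeasurableSet U) (m : ℕ) :
    MeasurableSet (Tower f U m) := by
  have hit : ∀ r, Measurable (⇑f)^[r] := fun r => f.continuous.measurable.iterate r
  have hit' : ∀ r, Measurable (⇑f.symm)^[r] := fun r => f.symm.continuous.measurable.iterate r
  have hS : ∀ n, MeasurableSet {z | FirstRet f U n z ∧ BadRet f m n z} := by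
    intro n
    have hUr : ∀ r, MeasurableSet {z | (⇑f)^[r] z ∈ U} := fun r => hit r hU
    refine MeasurableSet.inter (MeasurableSet.inter hU (MeasurableSet.inter (MeasurableSet.const _)
      (MeasurableSet.inter (hUr n) ?_))) (MeasurableSet.union (MeasurableSet.const _) ?_)
    · have : {z | ∀ r, 0 < r → r < n → (⇑f)^[r] z ∉ U} =
          ⋂ r, ⋂ (_ : 0 < r), ⋂ (_ : r < n), {z | (⇑f)^[r] z ∈ U}ᶜ := by
        ext z; simp
      refine Eq.mpr (congrArg MeasurableSet this) ?_
      exact MeasurableSet.iInter fun r => MeasurableSet.iInter fun _ =>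
        MeasurableSet.iInter fun _ => (hUr r).compl
    · have : {z | ∃ r, r < n ∧ (m : ℝ) < ‖(⇑f)^[r] z‖} =
          ⋃ r, ⋃ (_ : r < n), {z | (m : ℝ) < ‖(⇑f)^[r] z‖} := by
        ext z; simp
      refine Eq.mpr (congrArg MeasurableSet this) ?_
      exact MeasurableSet.iUnion fun r => MeasurableSet.iUnion fun _ =>
        measurableSet_lt measurable_const (hit r).norm
  have : Tower f U m = ⋃ n, ⋃ r, ⋃ (_ : r < n),
      (⇑f.symm)^[r] ⁻¹' {z | FirstRet f U n z ∧ BadRet f m n z} := by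
    have hl : ∀ r, Function.LeftInverse (⇑f.symm)^[r] (⇑f)^[r] := fun r =>
      Function.LeftInverse.iterate f.symm_apply_apply r
    have hr : ∀ r, Function.LeftInverse (⇑f)^[r] (⇑f.symm)^[r] := fun r =>
      Function.LeftInverse.iterate f.apply_symm_apply r
    ext y
    simp only [mem_iUnion]
    constructor
    · rintro ⟨n, r, z, h1, rfl, h2⟩
      refine ⟨n, r, h1, ?_⟩
      change _ ∧ _
      rwa [hl r z]
    · rintro ⟨n, r, h1, h2⟩
      exact ⟨n, r, _, h1, hr r y, h2⟩
  rw [this]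
  exact MeasurableSet.iUnion fun n => MeasurableSet.iUnion fun r => MeasurableSet.iUnion fun _ =>
    hit' r (hS n)

lemma Tower_antitone (f : ℂ → ℂ) (U : Set ℂ) : Antitone (Tower f U) := by
  rintro m m' hm y ⟨n, r, z, h1, h2, h3, h4⟩
  refine ⟨n, r, z, h1, h2, h3, ?_⟩
  rcases h4 with h | ⟨s, hs, h⟩
  · exact Or.inl (by omega)
  · exact Or.inr ⟨s, hs, lt_of_le_of_lt (by exact_mod_cast hm) h⟩

lemma BadRet_eventually (f : ℂ → ℂ) (n : ℕ) (z : ℂ) : ∃ m₀, ∀ m, m₀ ≤ m → ¬ BadRet f m n z := by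
  obtain ⟨m₀, hm₀⟩ := exists_nat_ge (∑ r ∈ Finset.range n, ‖f^[r] z‖)
  refine ⟨max n m₀, fun m hm => ?_⟩
  rintro (h | ⟨r, hr, h⟩)
  · have := le_max_left n m₀; omega
  · have h1 : ‖f^[r] z‖ ≤ ∑ r ∈ Finset.range n, ‖f^[r] z‖ :=
      Finset.single_le_sum (f := fun r => ‖f^[r] z‖) (fun _ _ => norm_nonneg _)
        (Finset.mem_range.2 hr)
    have h2 : (m₀ : ℝ) ≤ m := by exact_mod_cast (le_max_right n m₀).trans hm
    linarith

lemma Tower_unique_le (f : ℂ ≃ₜ ℂ) (U : Set ℂ) (n r n' r' : ℕ) (z w : ℂ) (hr : r ≤ r')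
    (hr' : r' < n') (h : FirstRet f U n z) (h' : FirstRet f U n' w)
    (e : (⇑f)^[r] z = (⇑f)^[r'] w) : z = w := by
  obtain ⟨d, rfl⟩ := Nat.exists_eq_add_of_le hr
  rw [Function.iterate_add_apply] at e
  have e' := f.injective.iterate r e
  rcases Nat.eq_zero_or_pos d with rfl | hd
  · exact e'
  · exact absurd (e' ▸ h.1) (h'.2.2.2 d hd (by omega))

lemma FirstRet_unique (f : ℂ → ℂ) (U : Set ℂ) (n n' : ℕ) (z : ℂ) (h : FirstRet f U n z)
    (h' : FirstRet f U n' z) : n = n' := by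
  rcases lt_trichotomy n n' with hl | hl | hl
  · exact absurd h.2.2.1 (h'.2.2.2 n h.2.1 hl)
  · exact hl
  · exact absurd h'.2.2.1 (h.2.2.2 n' h'.2.1 hl)

lemma Tower_iInter (f : ℂ ≃ₜ ℂ) (U : Set ℂ) : ⋂ m, Tower f U m = ∅ := by
  rw [Set.eq_empty_iff_forall_notMem]
  intro y hy
  rw [mem_iInter] at hy
  obtain ⟨n, r, z, h1, h2, h3, h4⟩ := hy 0
  obtain ⟨m₀, hm₀⟩ := BadRet_eventually f n z
  obtain ⟨n', r', z', h1', h2', h3', h4'⟩ := hy m₀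
  have hz : z = z' := by
    rcases le_total r r' with hl | hl
    · exact Tower_unique_le f U n r n' r' z z' hl h1' h3 h3' (h2.trans h2'.symm)
    · exact (Tower_unique_le f U n' r' n r z' z hl h1 h3' h3 (h2'.trans h2.symm)).symm
  subst hz
  have := FirstRet_unique f U n n' z h3 h3'
  subst this
  exact hm₀ m₀ le_rfl h4'

lemma Tower_measure (f : ℂ ≃ₜ ℂ) (U : Set ℂ) (hU : MeasurableSet U) (μ : Measure ℂ)
    [IsFiniteMeasure μ] (η : ℝ) (hη : 0 < η) (m₀ : ℕ) :
    ∃ m, m₀ ≤ m ∧ μ.real (Tower f U m) ≤ η := by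
  have h := tendsto_measure_iInter_atTop (μ := μ) (s := Tower f U)
    (fun m => (Tower_measurable f U hU m).nullMeasurableSet) (Tower_antitone f U)
    ⟨0, measure_ne_top _ _⟩
  rw [Tower_iInter, measure_empty] at h
  have h2 := (h.eventually (gt_mem_nhds (show (0 : ENNReal) < ENNReal.ofReal η by simpa using hη))).and
    (eventually_ge_atTop m₀)
  obtain ⟨m, hm1, hm2⟩ := h2.exists
  refine ⟨m, hm2, ?_⟩
  exact ENNReal.toReal_le_of_le_ofReal hη.le hm1.le

lemma FirstRet_exists (f : ℂ → ℂ) (U : Set ℂ) (n : ℕ) (hn : 0 < n) (z : ℂ) (hz : z ∈ U)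
    (h : f^[n] z ∈ U) : ∃ n₁, n₁ ≤ n ∧ FirstRet f U n₁ z := by
  have hex : ∃ n, 0 < n ∧ f^[n] z ∈ U := ⟨n, hn, h⟩
  refine ⟨Nat.find hex, Nat.find_min' hex ⟨hn, h⟩, hz, (Nat.find_spec hex).1,
    (Nat.find_spec hex).2, fun r hr0 hr hin => Nat.find_min hex hr ⟨hr0, hin⟩⟩

lemma count_bound (f : ℂ → ℂ) (U : Set ℂ) (A : ℕ → ℂ → ℤ) (k m : ℕ)
    (hadd : ∀ n m z, z ∈ U → f^[m] z ∈ U → f^[n] (f^[m] z) ∈ U →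
        A (n + m) z = A m z + A n (f^[m] z))
    (hk : ∀ n z, FirstRet f U n z → |A n z| ≤ k * n)
    (h0 : ∀ n z, FirstRet f U n z → ¬ BadRet f m n z → A n z = 0) :
    ∀ n z, z ∈ U → f^[n] z ∈ U →
      |(A n z : ℝ)| ≤ k * ∑ r ∈ Finset.range n, (Tower f U m).indicator (fun _ => (1 : ℝ)) (f^[r] z) := by
  intro n
  induction n using Nat.strong_induction_on with
  | _ n ih =>
    intro z hz hn
    rcases Nat.eq_zero_or_pos n with rfl | hpos
    · have := hadd 0 0 z hz hz hz
      simp at this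
      simp [this]
    obtain ⟨n₁, hle, hfr⟩ := FirstRet_exists f U n hpos z hz hn
    obtain ⟨d, rfl⟩ := Nat.exists_eq_add_of_le hle
    have hn' : f^[d] (f^[n₁] z) ∈ U := by
      rwa [← Function.iterate_add_apply, add_comm]
    have h1 := ih d (by have := hfr.2.1; omega) (f^[n₁] z) hfr.2.2.1 hn'
    rw [Finset.sum_range_add, add_comm n₁ d, hadd d n₁ z hz hfr.2.2.1 hn']
    have h2 : ∑ r ∈ Finset.range d, (Tower f U m).indicator (fun _ => (1 : ℝ)) (f^[n₁ + r] z) =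
        ∑ r ∈ Finset.range d, (Tower f U m).indicator (fun _ => (1 : ℝ)) (f^[r] (f^[n₁] z)) := by
      refine Finset.sum_congr rfl fun r _ => ?_
      rw [← Function.iterate_add_apply, add_comm]
    rw [h2, mul_add]
    push_cast
    refine (abs_add_le _ _).trans (add_le_add ?_ h1)
    by_cases hb : BadRet f m n₁ z
    · have h3 : ∑ r ∈ Finset.range n₁, (Tower f U m).indicator (fun _ => (1 : ℝ)) (f^[r] z) = n₁ := by
        rw [Finset.sum_congr rfl (g := fun _ => (1 : ℝ))]
        · simp
        · intro r hr
          have hin : f^[r] z ∈ Tower f U m := ⟨n₁, r, z, Finset.mem_range.1 hr, rfl, hfr, hb⟩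
          exact indicator_of_mem hin _
      rw [h3]
      exact_mod_cast hk n₁ z hfr
    · rw [h0 n₁ z hfr hb]
      simp only [Int.cast_zero, abs_zero]
      refine mul_nonneg (by positivity) (Finset.sum_nonneg fun r _ => ?_)
      exact indicator_nonneg (fun _ _ => zero_le_one) _

/-! ### Conclusion -/

lemma local_bound {f : ℂ ≃ₜ ℂ} (I : HIsotopy f) (k : ℕ) (hk0 : 0 < k)
    (hM : ∀ z ∈ FixPts ⇑f, ∀ z' ∈ FixPts ⇑f, z ≠ z' → |Enlace I z z'| < k) (hAd : Adapted I)
    (μ : Measure ℂ) [IsFiniteMeasure μ] (hinv : MeasurePreserving (⇑f) μ μ) (a : ℝ) (ha : 0 < a)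
    (c : ℂ) (δ : ℝ) (hfree : ∀ z ∈ ball c δ, f z ∉ ball c δ) (η : ℝ) (hη : 0 < η) :
    ∃ R : ℝ, ∀ z', f z' = z' → R < ‖z'‖ →
      μ ({zz | zz ∈ RecPlus f ∧ ∃ ρ : ℝ, HasRot I z' zz ρ ∧ a ≤ |ρ|} ∩ ball c δ)
        ≤ ENNReal.ofReal η := by
  have hkR : (0 : ℝ) < k := by exact_mod_cast hk0
  by_cases hfr : ∃ n z, FirstRet f (ball c δ) n z
  swap
  · refine ⟨0, fun z' _ _ => ?_⟩
    have : {zz | zz ∈ RecPlus f ∧ ∃ ρ : ℝ, HasRot I z' zz ρ ∧ a ≤ |ρ|} ∩ ball c δ = ∅ := by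
      rw [Set.eq_empty_iff_forall_notMem]
      rintro z ⟨⟨⟨n, hn, ht⟩, -⟩, hz⟩
      have h1 := (ht.eventually (isOpen_ball.mem_nhds hz)).and
        (hn.tendsto_atTop.eventually_ge_atTop 1)
      obtain ⟨j, hj1, hj2⟩ := h1.exists
      obtain ⟨n₁, -, h2⟩ := FirstRet_exists f (ball c δ) (n j) hj2 z hz hj1
      exact hfr ⟨n₁, z, h2⟩
    rw [this]; simp
  obtain ⟨n₀, z₀, h₀⟩ := hfr
  obtain ⟨m₀, hm₀⟩ := BadRet_eventually f n₀ z₀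
  set cc : ℝ := a / (2 * k) with hcc
  have hcc0 : 0 < cc := by positivity
  obtain ⟨m, hm, hWm⟩ := Tower_measure f (ball c δ) measurableSet_ball μ (cc * η) (by positivity) m₀
  obtain ⟨R, hR⟩ := far_estimate I hAd m (1 / (4 * (m + 1))) (by positivity)
  refine ⟨R, fun z' hz' hfar => ?_⟩
  obtain ⟨A, hA1, hA2, hA3⟩ := alpha_exists I k hk0 hM z' hz' c δ hfree
  have hzero : ∀ n z, FirstRet f (ball c δ) n z → ¬ BadRet f m n z → A n z = 0 := by
    intro n z h hb
    have h1 := hA1 n z h.1 h.2.2.1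
    simp only [BadRet, not_or, not_exists, not_and, not_lt] at hb
    have h2 : |∑ r ∈ Finset.range n, Enlace I ((⇑f)^[r] z) z'| ≤ n * (1 / (4 * (m + 1))) := by
      refine (Finset.abs_sum_le_sum_abs _ _).trans ?_
      refine (Finset.sum_le_card_nsmul _ _ (1 / (4 * ((m : ℝ) + 1))) ?_).trans ?_
      · intro r hr
        exact (hR z' hz' hfar _ (hb.2 r (Finset.mem_range.1 hr))).le
      · simp
    have h3 : (n : ℝ) * (1 / (4 * (m + 1))) < 1 / 2 := by
      have : (n : ℝ) ≤ m := by exact_mod_cast hb.1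
      rw [mul_one_div, div_lt_iff₀ (by positivity)]
      linarith
    have h4 : |(A n z : ℝ)| < 1 := by
      rw [abs_le] at h1 h2
      rw [abs_lt]
      constructor <;> linarith
    have h5 : |A n z| < 1 := by exact_mod_cast h4
    exact Int.abs_lt_one_iff.1 h5
  have hkb := hA3 ⟨n₀, z₀, h₀, hzero n₀ z₀ h₀ (hm₀ m hm)⟩
  have hcount := count_bound f (ball c δ) A k m hA2 hkb hzero
  have hsub : {zz | zz ∈ RecPlus f ∧ ∃ ρ : ℝ, HasRot I z' zz ρ ∧ a ≤ |ρ|} ∩ ball c δ ⊆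
      {z | ∃ n : ℕ, cc * n < ∑ r ∈ Finset.range n,
        (Tower f (ball c δ) m).indicator (fun _ => (1 : ℝ)) ((⇑f)^[r] z)} := by
    rintro z ⟨⟨⟨n, hn, ht⟩, ρ, hρ, haρ⟩, hz⟩
    have hlim := (hρ n hn ht).abs
    obtain ⟨N, hN⟩ := exists_nat_gt (2 / a)
    obtain ⟨j, hj1, hj2, hj3⟩ := ((ht.eventually (isOpen_ball.mem_nhds hz)).and
      ((hn.tendsto_atTop.eventually_ge_atTop (N + 1)).and
        (hlim.eventually (lt_mem_nhds (show 3 / 4 * a < |ρ| by linarith))))).exists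
    refine ⟨n j, ?_⟩
    have hnN : (N : ℝ) + 1 ≤ n j := by exact_mod_cast hj2
    have hnp : (0 : ℝ) < n j := by
      have : (0 : ℝ) ≤ N := by positivity
      linarith
    have hbig : 2 < a * n j := by
      rw [div_lt_iff₀ ha] at hN
      nlinarith
    rw [abs_div, abs_of_pos hnp, lt_div_iff₀ hnp] at hj3
    have h1 := hA1 (n j) z hz hj1
    have h2 := hcount (n j) z hz hj1
    have h3 : |∑ r ∈ Finset.range (n j), Enlace I ((⇑f)^[r] z) z'| ≤ |(A (n j) z : ℝ)| + 1 / 2 := by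
      have := abs_sub_abs_le_abs_sub (∑ r ∈ Finset.range (n j), Enlace I ((⇑f)^[r] z) z')
        (A (n j) z : ℝ)
      linarith
    rw [hcc, div_mul_eq_mul_div, div_lt_iff₀ (by positivity)]
    nlinarith
  refine (measure_mono hsub).trans ((maximal_ineq μ f hinv _
    (Tower_measurable f _ measurableSet_ball m) cc hcc0).trans ?_)
  refine ENNReal.ofReal_le_ofReal ?_
  rw [div_le_iff₀ hcc0]
  linarith

lemma fixed_not_large {f : ℂ ≃ₜ ℂ} (I : HIsotopy f) (z z' : ℂ) (hz : f z = z) (ρ : ℝ)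
    (h : HasRot I z' z ρ) : ρ = Enlace I z z' := by
  have hit : ∀ n, (⇑f)^[n] z = z := fun n => Function.iterate_fixed hz n
  have h1 := h (fun k => k + 1) (fun i j hij => by simpa using hij) (by simp [hit])
  refine tendsto_nhds_unique h1 ?_
  refine tendsto_const_nhds.congr fun k => ?_
  simp only [hit, Finset.sum_const, Finset.card_range, nsmul_eq_mul]
  have : ((k + 1 : ℕ) : ℝ) ≠ 0 := by positivity
  field_simp

theorem main_bound (f : ℂ ≃ₜ ℂ) (I : HIsotopy f) (hP1 : P1 I) (hA : Adapted I)
    (μ : Measure ℂ) [IsFiniteMeasure μ] (hinv : Measure.map (⇑f) μ = μ)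
    (a : ℝ) (ha : 0 < a) :
    ∀ ε : ℝ, 0 < ε → ∃ K : Set ℂ, IsCompact K ∧
      ∀ z' ∈ FixPts ⇑f \ K,
        μ {zz | zz ∈ RecPlus f ∧ ∃ ρ : ℝ, HasRot I z' zz ρ ∧ a ≤ |ρ|}
          < ENNReal.ofReal ε := by
  intro ε hε
  obtain ⟨M, hM⟩ := hP1
  obtain ⟨k, hk⟩ := exists_nat_gt (max M 0)
  have hk0 : 0 < k := by
    have := lt_of_le_of_lt (le_max_right M 0) hk
    exact_mod_cast this
  have hMk : ∀ z ∈ FixPts ⇑f, ∀ z' ∈ FixPts ⇑f, z ≠ z' → |Enlace I z z'| < k :=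
    fun z hz z' hz' h => lt_of_le_of_lt ((hM z hz z' hz' h).trans (le_max_left _ _)) hk
  have hmp : MeasurePreserving (⇑f) μ μ := ⟨f.continuous.measurable, hinv⟩
  have hFc : IsClosed (FixPts ⇑f) := isClosed_eq f.continuous continuous_id
  have hε4 : ENNReal.ofReal (ε / 4) ≠ 0 := by simpa using hε
  obtain ⟨K₁, -, hK₁, hμ₁⟩ := (MeasurableSet.univ (α := ℂ)).exists_isCompact_sdiff_lt
    (μ := μ) (measure_ne_top _ _) hε4
  obtain ⟨K₀, hK₀V, hK₀, hμ₀⟩ := hFc.measurableSet.compl.exists_isCompact_sdiff_lt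
    (μ := μ) (measure_ne_top _ _) hε4
  obtain ⟨C, hC⟩ := hK₁.isBounded.exists_norm_le
  -- free balls
  have hball : ∀ x : ℂ, ∃ δ : ℝ, x ∈ K₀ → 0 < δ ∧ ∀ z ∈ ball x δ, f z ∉ ball x δ := by
    intro x
    by_cases hx : x ∈ K₀
    swap
    · exact ⟨0, fun h => (hx h).elim⟩
    have hne : f x ≠ x := hK₀V hx
    obtain ⟨u, v, hu, hv, hxu, hxv, huv⟩ := t2_separation hne
    have hopen : IsOpen (v ∩ f ⁻¹' u) := hv.inter (hu.preimage f.continuous)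
    obtain ⟨δ, hδ, hb⟩ := Metric.isOpen_iff.1 hopen x ⟨hxv, hxu⟩
    refine ⟨δ, fun _ => ⟨hδ, fun z hz hz' => ?_⟩⟩
    exact Set.disjoint_left.1 huv (hb hz).2 (hb hz').1
  choose δ hδ using hball
  obtain ⟨t, htK, hcov⟩ := hK₀.elim_nhds_subcover (fun x => ball x (δ x))
    (fun x hx => ball_mem_nhds x (hδ x hx).1)
  have hη : 0 < ε / (4 * ((t.card : ℝ) + 1)) := by positivity
  have hloc : ∀ x : ℂ, ∃ R : ℝ, x ∈ t → ∀ z', f z' = z' → R < ‖z'‖ →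
      μ ({zz | zz ∈ RecPlus f ∧ ∃ ρ : ℝ, HasRot I z' zz ρ ∧ a ≤ |ρ|} ∩ ball x (δ x))
        ≤ ENNReal.ofReal (ε / (4 * ((t.card : ℝ) + 1))) := by
    intro x
    by_cases hx : x ∈ t
    · obtain ⟨R, hR⟩ := local_bound I k hk0 hMk hA μ hmp a ha x (δ x) (hδ x (htK x hx)).2 _ hη
      exact ⟨R, fun _ => hR⟩
    · exact ⟨0, fun h => (hx h).elim⟩
  choose R hR using hloc
  obtain ⟨R₁, hR₁⟩ := far_estimate I hA C a ha
  refine ⟨closedBall 0 (max (max C R₁) (∑ x ∈ t, |R x|)), isCompact_closedBall _ _, ?_⟩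
  rintro z' ⟨hz', hfar⟩
  rw [mem_closedBall, dist_zero_right, not_le, max_lt_iff, max_lt_iff] at hfar
  obtain ⟨⟨hf1, hf2⟩, hf3⟩ := hfar
  have hfR : ∀ x ∈ t, R x < ‖z'‖ := by
    intro x hx
    have := Finset.single_le_sum (f := fun x => |R x|) (fun _ _ => abs_nonneg _) hx
    have h2 := le_abs_self (R x)
    linarith
  set S := {zz | zz ∈ RecPlus f ∧ ∃ ρ : ℝ, HasRot I z' zz ρ ∧ a ≤ |ρ|} with hS
  have hsub : S ⊆ (univ \ K₁) ∪ ((FixPts ⇑f)ᶜ \ K₀) ∪ ⋃ x ∈ t, (S ∩ ball x (δ x)) := by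
    intro z hz
    by_cases h1 : z ∈ K₁
    swap
    · exact Or.inl (Or.inl ⟨mem_univ _, h1⟩)
    by_cases h2 : f z = z
    · exfalso
      obtain ⟨-, ρ, hρ, haρ⟩ := hz
      have e := fixed_not_large I z z' h2 ρ hρ
      have := hR₁ z' hz' hf2 z (hC z h1)
      rw [← e] at this
      linarith
    by_cases h3 : z ∈ K₀
    · obtain ⟨x, hx, hzx⟩ := mem_iUnion₂.1 (hcov h3)
      exact Or.inr (mem_iUnion₂.2 ⟨x, hx, hz, hzx⟩)
    · exact Or.inl (Or.inr ⟨h2, h3⟩)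
  have hsum : μ (⋃ x ∈ t, (S ∩ ball x (δ x))) ≤ ENNReal.ofReal (ε / 4) := by
    refine (measure_biUnion_finset_le t _).trans ?_
    refine (Finset.sum_le_card_nsmul t _ (ENNReal.ofReal (ε / (4 * ((t.card : ℝ) + 1)))) ?_).trans ?_
    · intro x hx
      exact hR x hx z' hz' (hfR x hx)
    · rw [← ENNReal.ofReal_nsmul]
      refine ENNReal.ofReal_le_ofReal ?_
      rw [nsmul_eq_mul, mul_div_assoc', div_le_div_iff₀ (by positivity) (by positivity)]
      nlinarith
  calc μ S ≤ μ ((univ \ K₁) ∪ ((FixPts ⇑f)ᶜ \ K₀) ∪ ⋃ x ∈ t, (S ∩ ball x (δ x))) := measure_mono hsub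
    _ ≤ μ (univ \ K₁) + μ ((FixPts ⇑f)ᶜ \ K₀) + μ (⋃ x ∈ t, (S ∩ ball x (δ x))) :=
      (measure_union_le _ _).trans (add_le_add (measure_union_le _ _) le_rfl)
    _ ≤ ENNReal.ofReal (ε / 4) + ENNReal.ofReal (ε / 4) + ENNReal.ofReal (ε / 4) :=
      add_le_add (add_le_add hμ₁.le hμ₀.le) hsum
    _ = ENNReal.ofReal (ε / 4 + ε / 4 + ε / 4) := by
      rw [ENNReal.ofReal_add (by positivity) (by positivity),
        ENNReal.ofReal_add (by positivity) (by positivity)]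
    _ < ENNReal.ofReal ε := by
      rw [ENNReal.ofReal_lt_ofReal_iff hε]; linarith

theorem stmt8_measure_of_large_rotation_tendsto_zero
    (f : ℂ ≃ₜ ℂ) (I : HIsotopy f) (hP1 : P1 I) (hP2 : P2 I)
    (hnc : ¬ IsCompact (FixPts ⇑f)) (hA : Adapted I)
    (μ : Measure ℂ) [IsFiniteMeasure μ] (hinv : Measure.map (⇑f) μ = μ)
    (a : ℝ) (ha : 0 < a) :
    ∀ ε : ℝ, 0 < ε → ∃ K : Set ℂ, IsCompact K ∧
      ∀ z' ∈ FixPts ⇑f \ K,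
        μ {zz | zz ∈ RecPlus f ∧ ∃ ρ : ℝ, HasRot I z' zz ρ ∧ a ≤ |ρ|}
          < ENNReal.ofReal ε := by
  exact main_bound f I hP1 hA μ hinv a ha

end
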